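/- arXiv:math/0504068 — 3 statements merged into one kernel-verified Lean document; each statement's English description precedes it below -/
import Mathlib

section
/- If R is right noetherian, left P-injective, left min-CS, and every nonzero complement left ideal of R is not small, then R is quasi-Frobenius. -/
open MulOpposite in
/-- Right ideals of `R`, as submodules of `R` over `Rᵐᵒᵖ`. -/
abbrev RIdeal (R : Type*) [Ring R] := Submodule Rᵐᵒᵖ R

section Defs
variable (R : Type*) [Ring R]

/-- Left annihilator of a subset. -/
def lAnn (X : Set R) : Set R := {a | ∀ x ∈ X, a * x = 0}

/-- Right annihilator of a subset. -/
def rAnn (X : Set R) : Set R := {a | ∀ x ∈ X, x * a = 0}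

/-- Right annihilator of a subset, as a right ideal. -/
def rAnnI (X : Set R) : RIdeal R where
  carrier := rAnn R X
  add_mem' := by intro a b ha hb x hx; rw [mul_add, ha x hx, hb x hx, add_zero]
  zero_mem' := by intro x hx; rw [mul_zero]
  smul_mem' := by
    intro c a ha x hx
    show x * (a * c.unop) = 0
    rw [← mul_assoc, ha x hx, zero_mul]

/-- `R` is left P-injective: `rl(a) = aR` for every `a`. -/
def IsLeftPInjective : Prop :=
  ∀ a x : R, (∀ u : R, u * a = 0 → u * x = 0) ↔ ∃ s : R, x = a * s

/-- `R` is left 2-injective. -/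
def IsLeft2Injective : Prop :=
  ∀ (a b : R) (f : ↥(Submodule.span R ({a, b} : Set R)) →ₗ[R] R),
    ∃ g : R →ₗ[R] R, ∀ x : ↥(Submodule.span R ({a, b} : Set R)), g (x : R) = f x

/-- `R` is left FP-injective: every matrix ring over `R` is left P-injective. -/
def IsLeftFPInjective : Prop :=
  ∀ n : ℕ, IsLeftPInjective (Matrix (Fin n) (Fin n) R)

/-- A left ideal is small if `K + I = R` implies `K = R`. -/
def IsSmallLeftIdeal (I : Ideal R) : Prop := ∀ K : Ideal R, K ⊔ I = ⊤ → K = ⊤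

/-- A complement left ideal: maximal with respect to intersecting some left ideal trivially. -/
def IsComplementLeftIdeal (C : Ideal R) : Prop :=
  ∃ S : Ideal R, C ⊓ S = ⊥ ∧ ∀ C' : Ideal R, C ≤ C' → C' ⊓ S = ⊥ → C' = C

/-- A right ideal is essential in `R`. -/
def IsEssentialRIdeal (I : RIdeal R) : Prop := ∀ K : RIdeal R, K ⊓ I = ⊥ → K = ⊥

/-- The right socle: the sum of all simple (minimal) right ideals. -/
def rSocle : RIdeal R := sSup {m : RIdeal R | IsSimpleModule Rᵐᵒᵖ m}

/-- The right singular ideal. -/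
def rSingular : Set R := {a | IsEssentialRIdeal R (rAnnI R {a})}

/-- ACC on right annihilators. -/
def ACCOnRightAnnihilators : Prop :=
  ∀ f : ℕ → Set R, (∀ n, ∃ X : Set R, f n = rAnn R X) → (∀ n, f n ⊆ f (n + 1)) →
    ∃ n, ∀ m, n ≤ m → f m = f n

/-- The Jacobson radical, as a set. -/
def jacobsonSet : Set R := (TwoSidedIdeal.jacobson (⊥ : TwoSidedIdeal R) : Set R)

/-- A subset is nilpotent if products of some fixed length of its elements vanish. -/
def IsNilpotentSet (J : Set R) : Prop :=
  ∃ n : ℕ, ∀ f : Fin (n + 1) → R, (∀ i, f i ∈ J) → (List.ofFn f).prod = 0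

/-- `R` is quasi-Frobenius: left noetherian and left self-injective. -/
def IsQuasiFrobenius : Prop := IsNoetherianRing R ∧ Module.Injective R R

/-- `R` is right mininjective. -/
def IsRightMininjective : Prop :=
  ∀ (I : RIdeal R), IsSimpleModule Rᵐᵒᵖ I → ∀ f : I →ₗ[Rᵐᵒᵖ] R,
    ∃ c : R, ∀ x : I, f x = c * (x : R)

/-- `R` is left mininjective. -/
def IsLeftMininjective : Prop :=
  ∀ (I : Ideal R), IsSimpleModule R I → ∀ f : I →ₗ[R] R,
    ∃ c : R, ∀ x : I, f x = (x : R) * c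

/-- `R` is right simple injective. -/
def IsRightSimpleInjective : Prop :=
  ∀ (I : RIdeal R) (f : I →ₗ[Rᵐᵒᵖ] R), IsSimpleModule Rᵐᵒᵖ (LinearMap.range f) →
    ∃ c : R, ∀ x : I, f x = c * (x : R)

/-- `R` is left CS: every left ideal is essential in a direct summand of `R`. -/
def IsLeftCS : Prop :=
  ∀ I : Ideal R, ∃ K : Ideal R, (∃ K' : Ideal R, IsCompl K K') ∧ I ≤ K ∧
    ∀ L : Ideal R, L ≤ K → L ⊓ I = ⊥ → L = ⊥

/-- `R` is left min-CS: every minimal left ideal is essential in a direct summand. -/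
def IsLeftMinCS : Prop :=
  ∀ I : Ideal R, IsSimpleModule R I → ∃ K : Ideal R, (∃ K' : Ideal R, IsCompl K K') ∧ I ≤ K ∧
    ∀ L : Ideal R, L ≤ K → L ⊓ I = ⊥ → L = ⊥

/-- `R` is right Johns: right noetherian and every right ideal is a right annihilator. -/
def IsRightJohns : Prop :=
  IsNoetherianRing Rᵐᵒᵖ ∧ ∀ I : RIdeal R, ∃ X : Set R, (I : Set R) = rAnn R X

end Defs

section MoreDefs
variable (R : Type*) [Ring R]

/-- Left annihilator of a subset, as a left ideal. -/
def lAnnI (X : Set R) : Ideal R where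
  carrier := lAnn R X
  add_mem' := by intro a b ha hb x hx; rw [add_mul, ha x hx, hb x hx, add_zero]
  zero_mem' := by intro x hx; rw [zero_mul]
  smul_mem' := by
    intro c a ha x hx
    show c * a * x = 0
    rw [mul_assoc, ha x hx, mul_zero]

/-- A left ideal is essential in `R`. -/
def IsEssentialLIdeal (I : Ideal R) : Prop := ∀ K : Ideal R, K ⊓ I = ⊥ → K = ⊥

/-- The left singular ideal `Z_l`. -/
def lSingular : Set R := {a | IsEssentialLIdeal R (lAnnI R {a})}

end MoreDefs


namespace Stmt9

section General
variable {R : Type*} [Ring R]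

theorem jac_left {a : R} (h : ∀ y : R, ∃ z : R, z * (1 - y * a) = 1) : a ∈ Ring.jacobson R := by
  rw [← Ideal.jacobson_bot, Ideal.mem_jacobson_iff]
  intro y
  obtain ⟨z, hz⟩ := h (-y)
  refine ⟨z, ?_⟩
  rw [Ideal.mem_bot]
  rw [← hz]; noncomm_ring

theorem jac_linv {a : R} (h : a ∈ Ring.jacobson R) : ∃ s : R, s * (1 - a) = 1 := by
  rw [← Ideal.jacobson_bot, Ideal.mem_jacobson_iff] at h
  obtain ⟨z, hz⟩ := h (-1)
  rw [Ideal.mem_bot] at hz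
  refine ⟨z, ?_⟩
  rw [← sub_eq_zero, ← hz]; noncomm_ring

theorem jac_unit {a : R} (h : a ∈ Ring.jacobson R) : ∃ s : R, s * (1 - a) = 1 ∧ (1 - a) * s = 1 := by
  obtain ⟨s, hs⟩ := jac_linv h
  have h2 : -(s * a) ∈ Ring.jacobson R := neg_mem (Ideal.mul_mem_left _ _ h)
  obtain ⟨t, ht⟩ := jac_linv h2
  have e : (1 - -(s * a)) = s := by
    have : s = s * (1 - a) + s * a := by noncomm_ring
    rw [hs] at this; rw [sub_neg_eq_add]; exact this.symm
  rw [e] at ht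
  have : t = 1 - a := by
    calc t = t * (s * (1 - a)) := by rw [hs, mul_one]
      _ = 1 - a := by rw [← mul_assoc, ht, one_mul]
  exact ⟨s, hs, this ▸ ht⟩

theorem jac_right {a : R} (h : ∀ y : R, ∃ z : R, (1 - a * y) * z = 1) : a ∈ Ring.jacobson R := by
  apply jac_left
  intro y
  obtain ⟨z, hz⟩ := h y
  obtain ⟨w, hw⟩ := h (-(y * z))
  have e : (1 - a * -(y * z)) = z := by
    have : z = (1 - a * y) * z + a * y * z := by noncomm_ring
    rw [hz] at this
    rw [mul_neg, sub_neg_eq_add, ← mul_assoc]; exact this.symm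
  rw [e] at hw
  have : w = 1 - a * y := by
    calc w = ((1 - a * y) * z) * w := by rw [hz, one_mul]
      _ = 1 - a * y := by rw [mul_assoc, hw, mul_one]
  rw [this] at hw
  refine ⟨1 + y * z * a, ?_⟩
  calc (1 + y * z * a) * (1 - y * a) = 1 - y * a + y * (z * (1 - a * y)) * a := by noncomm_ring
    _ = 1 := by rw [hw]; noncomm_ring

theorem jac_op (a : R) : MulOpposite.op a ∈ Ring.jacobson Rᵐᵒᵖ ↔ a ∈ Ring.jacobson R := by
  constructor
  · intro h
    apply jac_right
    intro y
    have h2 := Ideal.mul_mem_left _ (MulOpposite.op y) h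
    obtain ⟨s, hs, -⟩ := jac_unit h2
    exact ⟨s.unop, by simpa using congrArg MulOpposite.unop hs⟩
  · intro h
    apply jac_left
    intro y
    have h2 := Ideal.mul_mem_right y.unop _ h
    obtain ⟨s, -, hs⟩ := jac_unit h2
    refine ⟨MulOpposite.op s, MulOpposite.unop_injective ?_⟩
    simpa using hs

theorem semisimple_aux (B : Type*) [Ring B] [IsNoetherianRing B]
    (h : ∀ a : B, a ≠ 0 → ∃ c s : B, c ≠ 0 ∧ c = s * a * c) : IsSemisimpleRing B := by
  -- nonzero left principal ideals contain nonzero idempotents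
  have idem : ∀ a : B, a ≠ 0 → ∃ w : B, w * a ≠ 0 ∧ (w * a) * (w * a) = w * a := by
    intro a ha
    let S : Set (Ideal B) := {I | ∃ y, a * y ≠ 0 ∧ I = lAnnI B {a * y}}
    obtain ⟨I, ⟨y, hy, rfl⟩, hmax⟩ := set_has_maximal_iff_noetherian.2 (inferInstance : IsNoetherian B B) S
      ⟨_, 1, by simpa using ha, rfl⟩
    obtain ⟨d, s, hd, hs⟩ := h _ hy
    have hcd : a * y * d ≠ 0 := by
      intro h0; apply hd; rw [hs, mul_assoc, h0, mul_zero]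
    have hcs : a * y * s * (a * y) = a * y := by
      by_contra hne
      apply hmax (lAnnI B {a * (y * d)}) ⟨_, by rwa [← mul_assoc], rfl⟩
      constructor
      · intro u hu x hx
        have hu' : u * (a * y) = 0 := hu _ rfl
        rw [Set.mem_singleton_iff.1 hx, ← mul_assoc a, ← mul_assoc, hu', zero_mul]
      · intro hle
        have h1 : (a * y * s - 1) ∈ lAnnI B {a * (y * d)} := by
          intro x hx
          rw [Set.mem_singleton_iff.1 hx]
          have : (a * y * s - 1) * (a * (y * d)) = a * y * (s * (a * y) * d) - a * y * d := by
            noncomm_ring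
          rw [this, ← hs, sub_self]
        have h2 : (a * y * s - 1) * (a * y) = 0 := hle h1 _ rfl
        apply hne
        rw [sub_mul, one_mul] at h2
        exact sub_eq_zero.1 h2
    set x := y * s with hx
    have hg : (a * x) * (a * x) = a * x := by
      calc a * x * (a * x) = (a * y * s * (a * y)) * s := by rw [hx]; noncomm_ring
        _ = a * x := by rw [hcs, hx, mul_assoc]
    have hg0 : a * x ≠ 0 := by
      intro h0; apply hy; rw [← hcs, mul_assoc a, ← hx, h0, zero_mul]
    refine ⟨x * (a * x), ?_, ?_⟩
    · intro h0
      apply hg0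
      calc a * x = (a * x) * (a * x) * (a * x) := by rw [hg, hg]
        _ = a * (x * (a * x) * a) * x := by noncomm_ring
        _ = 0 := by rw [h0]; simp
    · calc x * (a * x) * a * (x * (a * x) * a) = x * ((a * x) * (a * x) * (a * x)) * a := by noncomm_ring
        _ = _ := by rw [hg, hg]
  have key : ∀ E : Ideal B, ∃ e : B, e * e = e ∧ E = Ideal.span {e} := by
    intro E
    let S : Set (Ideal B) := {I | ∃ e, e ∈ E ∧ e * e = e ∧ I = Ideal.span {e}}
    obtain ⟨I, ⟨e, heE, he, rfl⟩, hmax⟩ := set_has_maximal_iff_noetherian.2 (inferInstance : IsNoetherian B B) S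
      ⟨_, 0, E.zero_mem, by simp, rfl⟩
    refine ⟨e, he, le_antisymm ?_ ((Ideal.span_singleton_le_iff_mem _).2 heE)⟩
    intro x hx
    by_contra hxe
    have hy0 : x - x * e ≠ 0 := by
      intro h0
      apply hxe
      rw [sub_eq_zero.1 h0]
      exact Ideal.mul_mem_left _ _ (Ideal.mem_span_singleton_self e)
    obtain ⟨w, hg0, hg⟩ := idem _ hy0
    have hge : w * (x - x * e) * e = 0 := by
      have : w * (x - x * e) * e = w * (x * e - x * (e * e)) := by noncomm_ring
      rw [this, he, sub_self, mul_zero]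
    have hgE : w * (x - x * e) ∈ E :=
      Ideal.mul_mem_left _ _ (E.sub_mem hx (Ideal.mul_mem_left _ _ heE))
    set g := w * (x - x * e)
    have hgg : g * (e + g - e * g) = g := by
      have : g * (e + g - e * g) = g * e + g * g - (g * e) * g := by noncomm_ring
      rw [this, hge, hg]; simp
    have hee : e * (e + g - e * g) = e := by
      have : e * (e + g - e * g) = e * e + e * g - (e * e) * g := by noncomm_ring
      rw [this, he]; simp
    refine hmax (Ideal.span {e + g - e * g}) ⟨_, ?_, ?_, rfl⟩ ?_
    · exact E.sub_mem (E.add_mem heE hgE) (Ideal.mul_mem_left _ _ hgE)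
    · calc (e + g - e * g) * (e + g - e * g)
          = e * (e + g - e * g) + g * (e + g - e * g) - e * (g * (e + g - e * g)) := by noncomm_ring
        _ = _ := by rw [hee, hgg]
    · constructor
      · apply (Ideal.span_singleton_le_iff_mem _).2
        exact Ideal.mem_span_singleton'.2 ⟨e, hee⟩
      · intro hle
        have : g ∈ Ideal.span {e} := hle (Ideal.mem_span_singleton'.2 ⟨g, hgg⟩)
        obtain ⟨q, hq⟩ := Ideal.mem_span_singleton'.1 this
        apply hg0
        rw [← hq]
        have : q * e = q * e * e := by rw [mul_assoc, he]
        rw [this, hq, hge]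
  have : ComplementedLattice (Ideal B) := by
    constructor
    intro E
    obtain ⟨e, he, rfl⟩ := key E
    refine ⟨Ideal.span {1 - e}, ?_, ?_⟩
    · rw [Submodule.disjoint_def]
      intro x h1 h2
      obtain ⟨p, rfl⟩ := Ideal.mem_span_singleton'.1 h1
      obtain ⟨q, hq⟩ := Ideal.mem_span_singleton'.1 h2
      have : p * e = p * e * e := by rw [mul_assoc, he]
      rw [this, ← hq, mul_assoc, sub_mul, one_mul, he, sub_self, mul_zero]
    · rw [codisjoint_iff, Ideal.eq_top_iff_one]
      have := Submodule.add_mem_sup (Ideal.mem_span_singleton_self e)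
        (Ideal.mem_span_singleton_self (1 - e))
      rwa [add_sub_cancel] at this
  exact { this with }

end General

section Nilp
variable {R : Type*} [Ring R]

/-- `Z_l ⊆ J`. -/
theorem sing_le (hP : IsLeftPInjective R) {a : R}
    (h : ∀ k : R, k ≠ 0 → ∃ r, r * k ≠ 0 ∧ r * k * a = 0) : a ∈ Ring.jacobson R := by
  apply jac_right
  intro y
  obtain ⟨s, hs⟩ := (hP (1 - a * y) 1).1 (by
    intro u hu
    rw [mul_one]
    by_contra hu0
    obtain ⟨r, hr, hra⟩ := h u hu0
    apply hr
    have : r * u = r * (u * (1 - a * y)) + r * u * a * y := by noncomm_ring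
    rw [this, hu, hra]; simp)
  exact ⟨s, hs.symm⟩

/-- `J ⊆ Z_l`. -/
theorem le_sing (hP : IsLeftPInjective R) {a : R} (ha : a ∈ Ring.jacobson R) (k : R) (hk : k ≠ 0) :
    ∃ r, r * k ≠ 0 ∧ r * k * a = 0 := by
  by_contra hcon
  push Not at hcon
  obtain ⟨s, hs⟩ := (hP (k * a) k).1 (by
    intro u hu
    by_contra h0
    exact hcon u h0 (by rw [mul_assoc, hu]))
  obtain ⟨v, -, hv⟩ := jac_unit (Ideal.mul_mem_right s _ ha)
  apply hk
  calc k = k * ((1 - a * s) * v) := by rw [hv, mul_one]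
    _ = (k - k * a * s) * v := by noncomm_ring
    _ = 0 := by rw [← hs]; simp

theorem fin_ess (hP : IsLeftPInjective R) (s : Finset R) (hs : ∀ y ∈ s, y ∈ Ring.jacobson R) :
    ∀ k : R, k ≠ 0 → ∃ r, r * k ≠ 0 ∧ ∀ y ∈ s, r * k * y = 0 := by
  classical
  induction s using Finset.induction_on with
  | empty => intro k hk; exact ⟨1, by simpa using hk, by simp⟩
  | insert a s ha ih =>
    intro k hk
    obtain ⟨r, hr, hr2⟩ := ih (fun y hy => hs y (Finset.mem_insert_of_mem hy)) k hk
    obtain ⟨t, ht, ht2⟩ := le_sing hP (hs a (Finset.mem_insert_self _ _)) _ hr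
    refine ⟨t * r, by rwa [mul_assoc], ?_⟩
    intro y hy
    rcases Finset.mem_insert.1 hy with rfl | hy
    · rw [mul_assoc t, ht2]
    · rw [mul_assoc t, mul_assoc t, hr2 y hy, mul_zero]

theorem vec_ess (L : Ideal R) (hL : ∀ k : R, k ≠ 0 → ∃ r, r * k ≠ 0 ∧ r * k ∈ L) (s : Finset R) :
    ∀ r : R, (∃ y ∈ s, r * y ≠ 0) → ∃ t, (∀ y ∈ s, t * (r * y) ∈ L) ∧ ∃ y ∈ s, t * (r * y) ≠ 0 := by
  classical
  induction s using Finset.induction_on with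
  | empty => intro r hr; simp at hr
  | insert a s ha ih =>
    intro r hr
    by_cases h : ∃ y ∈ s, r * y ≠ 0
    · obtain ⟨t, ht, y, hy, hy0⟩ := ih r h
      by_cases h2 : t * (r * a) = 0
      · refine ⟨t, ?_, y, Finset.mem_insert_of_mem hy, hy0⟩
        intro z hz
        rcases Finset.mem_insert.1 hz with rfl | hz
        · rw [h2]; exact L.zero_mem
        · exact ht z hz
      · obtain ⟨w, hw, hwL⟩ := hL _ h2
        refine ⟨w * t, ?_, a, Finset.mem_insert_self _ _, by rwa [mul_assoc]⟩
        intro z hz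
        rw [mul_assoc]
        rcases Finset.mem_insert.1 hz with rfl | hz
        · exact hwL
        · exact L.mul_mem_left _ (ht z hz)
    · push Not at h
      obtain ⟨y, hy, hy0⟩ := hr
      have hya : y = a := by
        rcases Finset.mem_insert.1 hy with h1 | h1
        · exact h1
        · exact absurd (h y h1) hy0
      subst hya
      obtain ⟨w, hw, hwL⟩ := hL _ hy0
      refine ⟨w, ?_, y, Finset.mem_insert_self _ _, hw⟩
      intro z hz
      rcases Finset.mem_insert.1 hz with rfl | hz
      · exact hwL
      · rw [h z hz, mul_zero]; exact L.zero_mem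

/-- A two-sided ideal as a right ideal. -/
def toR (I : Ideal R) [I.IsTwoSided] : RIdeal R where
  carrier := I
  add_mem' := fun ha hb => I.add_mem ha hb
  zero_mem' := I.zero_mem
  smul_mem' := fun c _ hx => I.mul_mem_right c.unop hx

/-- The left annihilator of a left ideal, as a right ideal. -/
def lAnnR (I : Ideal R) : RIdeal R where
  carrier := {x | ∀ y ∈ I, x * y = 0}
  add_mem' := fun ha hb y hy => by rw [add_mul, ha y hy, hb y hy, add_zero]
  zero_mem' := fun y _ => zero_mul y
  smul_mem' := fun c x hx y hy => by
    show x * c.unop * y = 0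
    rw [mul_assoc, hx _ (I.mul_mem_left _ hy)]

theorem noeth_R [IsNoetherianRing Rᵐᵒᵖ] : IsNoetherian Rᵐᵒᵖ R :=
  isNoetherian_of_linearEquiv (MulOpposite.opLinearEquiv Rᵐᵒᵖ : R ≃ₗ[Rᵐᵒᵖ] Rᵐᵒᵖ).symm

theorem kill_span {s : Set R} {x : R} (h : ∀ y ∈ s, x * y = 0) :
    ∀ y ∈ (Submodule.span Rᵐᵒᵖ s : RIdeal R), x * y = 0 := by
  have : (Submodule.span Rᵐᵒᵖ s : RIdeal R) ≤ rAnnI R {x} := by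
    rw [Submodule.span_le]
    intro y hy z hz
    rw [Set.mem_singleton_iff.1 hz]; exact h y hy
  intro y hy
  exact this hy x rfl

theorem fg_right [IsNoetherianRing Rᵐᵒᵖ] (I : Ideal R) [I.IsTwoSided] :
    ∃ s : Finset R, (∀ y ∈ s, y ∈ I) ∧ (∀ x : R, (∀ y ∈ s, x * y = 0) → ∀ y ∈ I, x * y = 0) ∧
      ∀ K : RIdeal R, (∀ y ∈ s, y ∈ K) → ∀ y ∈ I, y ∈ K := by
  obtain ⟨s, hs⟩ := (noeth_R (R := R)).noetherian (toR I)
  refine ⟨s, ?_, ?_, ?_⟩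
  · intro y hy
    have : y ∈ toR I := hs ▸ Submodule.subset_span hy
    exact this
  · intro x hx y hy
    apply kill_span hx
    rw [hs]; exact hy
  · intro K hK y hy
    have h1 : y ∈ toR I := hy
    rw [← hs] at h1
    exact Submodule.span_le.2 hK h1

/-- Elements `p` with `t p q = 0` for all `q` in a left ideal. -/
def killR (t : R) (I : Ideal R) : RIdeal R where
  carrier := {p | ∀ q ∈ I, t * p * q = 0}
  add_mem' := fun ha hb y hy => by rw [mul_add, add_mul, ha y hy, hb y hy, add_zero]
  zero_mem' := fun y _ => by rw [mul_zero, zero_mul]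
  smul_mem' := fun c x hx y hy => by
    show t * (x * c.unop) * y = 0
    rw [← mul_assoc, mul_assoc, hx _ (I.mul_mem_left _ hy)]

theorem jac_nilp [IsNoetherianRing Rᵐᵒᵖ] (hP : IsLeftPInjective R) :
    ∃ n, Ring.jacobson R ^ n = ⊥ := by
  set J := Ring.jacobson R with hJ
  have two : ∀ n, (J ^ n).IsTwoSided := fun n => inferInstance
  let f : ℕ →o RIdeal R := ⟨fun n => lAnnR (J ^ n), by
    apply monotone_nat_of_le_succ
    intro n x hx y hy
    exact hx y (Ideal.pow_le_pow_right (Nat.le_succ n) hy)⟩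
  obtain ⟨n, hn⟩ := monotone_stabilizes_iff_noetherian.2 (noeth_R (R := R)) f
  refine ⟨n, ?_⟩
  by_contra hne
  obtain ⟨sJ, hsJ, hkJ, -⟩ := fg_right J
  obtain ⟨sn, hsn, hkn, hkn2⟩ := fg_right (J ^ n)
  have hL : ∀ k : R, k ≠ 0 → ∃ r, r * k ≠ 0 ∧ r * k ∈ lAnnI R (J : Set R) := by
    intro k hk
    obtain ⟨r, hr, hr2⟩ := fin_ess hP sJ hsJ k hk
    exact ⟨r, hr, hkJ _ hr2⟩
  have h1 : ∃ y ∈ sn, (1 : R) * y ≠ 0 := by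
    by_contra hcon
    push Not at hcon
    apply hne
    rw [eq_bot_iff]
    intro y hy
    have := hkn 1 hcon y hy
    simpa using this
  obtain ⟨t, ht, y, hy, hy0⟩ := vec_ess _ hL sn 1 h1
  simp only [one_mul] at ht hy0
  -- t kills J^(n+1)
  have ht1 : t ∈ f (n + 1) := by
    intro z hz
    have hz' : z ∈ J ^ n * J := by rwa [← Submodule.pow_succ]
    refine Submodule.smul_induction_on hz' ?_ ?_
    · intro p hp q hq
      have : p ∈ killR t J := hkn2 (killR t J) (fun y hy => ht y hy) p hp
      rw [smul_eq_mul, ← mul_assoc]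
      exact this q hq
    · intro a b ha hb
      rw [mul_add, ha, hb, add_zero]
  rw [← hn (n + 1) (Nat.le_succ n)] at ht1
  exact hy0 (ht1 y (hsn y hy))

end Nilp

section SS
variable {R : Type*} [Ring R]

theorem exists_c (hP : IsLeftPInjective R)
    (hC : ∀ C : Ideal R, IsComplementLeftIdeal R C → C ≠ ⊥ → ¬ IsSmallLeftIdeal R C)
    {a : R} (ha : a ∉ Ring.jacobson R) : ∃ c s : R, c ∉ Ring.jacobson R ∧ c = c * a * s := by
  have h1 : ∃ k : R, k ≠ 0 ∧ ∀ r, r * k * a = 0 → r * k = 0 := by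
    by_contra hcon
    push Not at hcon
    apply ha
    apply sing_le hP
    intro k hk
    obtain ⟨r, h1, h2⟩ := hcon k hk
    exact ⟨r, h2, h1⟩
  obtain ⟨k, hk, hka⟩ := h1
  set S := lAnnI R {a} with hS
  have hKS : Ideal.span {k} ⊓ S = ⊥ := by
    rw [eq_bot_iff]
    rintro x ⟨h1, h2⟩
    obtain ⟨r, rfl⟩ := Ideal.mem_span_singleton'.1 h1
    exact hka r (h2 a rfl)
  obtain ⟨C, hKC, hCmax⟩ := zorn_le_nonempty₀ {C : Ideal R | C ⊓ S = ⊥} (by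
    intro c hc hchain y hy
    refine ⟨sSup c, ?_, fun z hz => le_sSup hz⟩
    show sSup c ⊓ S = ⊥
    rw [eq_bot_iff]
    rintro x ⟨h1, h2⟩
    obtain ⟨D, hD, hxD⟩ := (Submodule.mem_sSup_of_directed ⟨y, hy⟩ hchain.directedOn).1 h1
    have : x ∈ D ⊓ S := ⟨hxD, h2⟩
    rw [show D ⊓ S = ⊥ from hc hD] at this
    exact this) _ hKS
  have hCS : C ⊓ S = ⊥ := hCmax.prop
  have hcomp : IsComplementLeftIdeal R C :=
    ⟨S, hCS, fun C' h1 h2 => le_antisymm (hCmax.le_of_ge h2 h1) h1⟩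
  have hC0 : C ≠ ⊥ := by
    rintro rfl
    exact hk ((Ideal.span_singleton_le_iff_mem _).1 hKC)
  have hns := hC C hcomp hC0
  have hnle : ¬ C ≤ Ring.jacobson R := by
    intro hle
    apply hns
    intro K hK
    by_contra hKt
    obtain ⟨M, hM, hKM⟩ := Ideal.exists_le_maximal K hKt
    apply hM.ne_top
    rw [eq_top_iff, ← hK]
    exact sup_le hKM (hle.trans (Ring.jacobson_le_of_isMaximal M))
  obtain ⟨c, hcC, hcJ⟩ := SetLike.not_le_iff_exists.1 hnle
  obtain ⟨s, hs⟩ := (hP (c * a) c).1 (by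
    intro u hu
    have : u * c ∈ C ⊓ S := ⟨C.mul_mem_left _ hcC, by
      intro x hx; rw [Set.mem_singleton_iff.1 hx, mul_assoc, hu]⟩
    rw [hCS] at this
    exact this)
  exact ⟨c, s, hcJ, hs⟩

theorem ss_quot [IsNoetherianRing Rᵐᵒᵖ] (hP : IsLeftPInjective R)
    (hC : ∀ C : Ideal R, IsComplementLeftIdeal R C → C ≠ ⊥ → ¬ IsSmallLeftIdeal R C) :
    IsSemisimpleRing (R ⧸ Ring.jacobson R) := by
  set J := Ring.jacobson R
  let π : R →+* R ⧸ J := Ideal.Quotient.mk J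
  have hπ : Function.Surjective π := Ideal.Quotient.mk_surjective
  have : IsNoetherianRing (R ⧸ J)ᵐᵒᵖ := by
    refine isNoetherianRing_of_surjective Rᵐᵒᵖ _ (RingHom.op π) ?_
    intro x
    obtain ⟨y, hy⟩ := hπ x.unop
    exact ⟨MulOpposite.op y, MulOpposite.unop_injective (by simpa using hy)⟩
  rw [← isSemisimpleRing_mulOpposite_iff]
  apply semisimple_aux
  intro a ha
  obtain ⟨y, hy⟩ := hπ a.unop
  have hyJ : y ∉ J := by
    intro h
    apply ha
    apply MulOpposite.unop_injective
    rw [← hy, MulOpposite.unop_zero]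
    exact Ideal.Quotient.eq_zero_iff_mem.2 h
  obtain ⟨c, s, hc, hs⟩ := exists_c hP hC hyJ
  refine ⟨MulOpposite.op (π c), MulOpposite.op (π s), ?_, ?_⟩
  · intro h
    apply hc
    apply Ideal.Quotient.eq_zero_iff_mem.1
    simpa using h
  · apply MulOpposite.unop_injective
    rw [MulOpposite.unop_mul, MulOpposite.unop_mul, ← hy]
    simp only [MulOpposite.unop_op, ← map_mul]
    rw [← mul_assoc, ← hs]

theorem op_pow_mem (n : ℕ) : ∀ x ∈ Ring.jacobson Rᵐᵒᵖ ^ n, x.unop ∈ Ring.jacobson R ^ n := by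
  induction n with
  | zero => intro x _; simp [Submodule.pow_zero, Ideal.one_eq_top]
  | succ n ih =>
    intro x hx
    rw [Submodule.pow_succ] at hx
    rw [Ideal.IsTwoSided.pow_succ]
    refine Submodule.smul_induction_on hx ?_ ?_
    · intro p hp q hq
      rw [smul_eq_mul, MulOpposite.unop_mul]
      exact Ideal.mul_mem_mul ((jac_op _).1 hq) (ih p hp)
    · intro a b ha hb
      rw [MulOpposite.unop_add]
      exact Ideal.add_mem _ ha hb

theorem semiprim_op (h1 : IsSemisimpleRing (R ⧸ Ring.jacobson R))
    (h2 : ∃ n, Ring.jacobson R ^ n = ⊥) : IsSemiprimaryRing Rᵐᵒᵖ := by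
  constructor
  · let B := Rᵐᵒᵖ ⧸ Ring.jacobson Rᵐᵒᵖ
    let π : Rᵐᵒᵖ →+* B := Ideal.Quotient.mk _
    let φ : R →+* Bᵐᵒᵖ := (RingHom.op π).comp (RingEquiv.opOp R).toRingHom
    have hφ : ∀ a ∈ Ring.jacobson R, φ a = 0 := by
      intro a ha
      apply MulOpposite.unop_injective
      exact Ideal.Quotient.eq_zero_iff_mem.2 ((jac_op a).2 ha)
    let ψ : R ⧸ Ring.jacobson R →+* Bᵐᵒᵖ := Ideal.Quotient.lift _ φ hφ
    have hψ : Function.Surjective ψ := by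
      apply Ideal.Quotient.lift_surjective_of_surjective
      intro x
      obtain ⟨y, hy⟩ := Ideal.Quotient.mk_surjective x.unop
      exact ⟨y.unop, MulOpposite.unop_injective hy⟩
    rw [← isSemisimpleRing_mulOpposite_iff]
    exact RingHom.isSemisimpleRing_of_surjective ψ hψ
  · obtain ⟨n, hn⟩ := h2
    refine ⟨n, ?_⟩
    rw [Ideal.zero_eq_bot, eq_bot_iff]
    intro x hx
    have := op_pow_mem n x hx
    rw [hn, Ideal.mem_bot] at this
    exact MulOpposite.unop_injective this

theorem artin_R [IsNoetherianRing Rᵐᵒᵖ] (h1 : IsSemisimpleRing (R ⧸ Ring.jacobson R))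
    (h2 : ∃ n, Ring.jacobson R ^ n = ⊥) : IsArtinian Rᵐᵒᵖ R := by
  have := semiprim_op h1 h2
  exact IsSemiprimaryRing.isNoetherian_iff_isArtinian.1 (noeth_R (R := R))

end SS

section Kasch
variable {R : Type*} [Ring R]

theorem maxf (h1 : IsSemisimpleRing (R ⧸ Ring.jacobson R)) (M : Ideal R) [hM : M.IsMaximal] :
    ∃ f : R, 1 - f ∈ M ∧ ∀ m ∈ M, m * f ∈ Ring.jacobson R := by
  set J := Ring.jacobson R
  have hJM : J ≤ M := Ring.jacobson_le_of_isMaximal M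
  let π : R →+* R ⧸ J := Ideal.Quotient.mk J
  have hπ : Function.Surjective π := Ideal.Quotient.mk_surjective
  obtain ⟨g, hg, hgM⟩ := IsSemisimpleRing.ideal_eq_span_idempotent (M.map π)
  have hgmem : g ∈ M.map π := by rw [hgM]; exact Submodule.mem_span_singleton_self g
  obtain ⟨x, hxM, hx⟩ := (Ideal.mem_map_iff_of_surjective π hπ).1 hgmem
  refine ⟨1 - x, by rwa [sub_sub_cancel], ?_⟩
  intro m hm
  have h2 : π m ∈ M.map π := Ideal.mem_map_of_mem π hm
  rw [hgM] at h2
  obtain ⟨q, hq⟩ := Submodule.mem_span_singleton.1 h2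
  apply Ideal.Quotient.eq_zero_iff_mem.1
  show π (m * (1 - x)) = 0
  rw [map_mul, map_sub, map_one, hx, ← hq, smul_eq_mul, mul_assoc, mul_sub, mul_one, hg.eq, sub_self,
    mul_zero]

theorem blocks (h1 : IsSemisimpleRing (R ⧸ Ring.jacobson R)) :
    ∃ (n : ℕ) (c : Fin n → R), (∀ i, c i ∉ Ring.jacobson R) ∧
      ((∑ i, c i) - 1 ∈ Ring.jacobson R) ∧ (∀ i x, c i * x - x * c i ∈ Ring.jacobson R) ∧
      (∀ i j, i ≠ j → c i * c j ∈ Ring.jacobson R) ∧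
      (∀ i, c i * c i - c i ∈ Ring.jacobson R) ∧
      ∀ i (I : Ideal R), I.IsTwoSided → Ring.jacobson R ≤ I → ∀ x ∈ I,
        c i * x ∉ Ring.jacobson R → c i ∈ I := by
  set J := Ring.jacobson R
  obtain ⟨n, D, d, _, hd, ⟨e⟩⟩ :=
    IsSemisimpleRing.exists_ringEquiv_pi_matrix_divisionRing (R ⧸ J)
  let ρ : R →+* Π i, Matrix (Fin (d i)) (Fin (d i)) (D i) :=
    e.toRingHom.comp (Ideal.Quotient.mk J)
  have hρ : Function.Surjective ρ := e.surjective.comp Ideal.Quotient.mk_surjective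
  have hker : ∀ x, x ∈ J ↔ ρ x = 0 := by
    intro x
    rw [← Ideal.Quotient.eq_zero_iff_mem]
    exact (map_eq_zero_iff e e.injective).symm
  choose c hc using fun i => hρ (Pi.single i 1)
  refine ⟨n, c, ?_, ?_, ?_, ?_, ?_, ?_⟩
  · intro i hi
    rw [hker, hc] at hi
    have := congrFun hi i
    simp at this
  · rw [hker, map_sub, map_sum, map_one, sub_eq_zero]
    simp_rw [hc]
    exact Finset.univ_sum_single (1 : Π i, Matrix (Fin (d i)) (Fin (d i)) (D i))
  · intro i x
    rw [hker, map_sub, map_mul, map_mul, hc, sub_eq_zero]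
    ext j : 1
    by_cases h : j = i
    · subst h; simp
    · simp [Pi.single_eq_of_ne h]
  · intro i j hij
    rw [hker, map_mul, hc, hc]
    ext l : 1
    by_cases h : l = i
    · subst h; simp [Pi.single_eq_of_ne hij]
    · simp [Pi.single_eq_of_ne h]
  · intro i
    rw [hker, map_sub, map_mul, hc, sub_eq_zero, ← Pi.single_mul, one_mul]
  · intro i I hI hJI x hx hcx
    let T : TwoSidedIdeal (Matrix (Fin (d i)) (Fin (d i)) (D i)) :=
      TwoSidedIdeal.mk' {y | ∃ z ∈ I, ρ z i = y}
        ⟨0, I.zero_mem, by simp⟩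
        (by rintro _ _ ⟨z, hz, rfl⟩ ⟨w, hw, rfl⟩; exact ⟨z + w, I.add_mem hz hw, by simp⟩)
        (by rintro _ ⟨z, hz, rfl⟩; exact ⟨-z, I.neg_mem hz, by simp⟩)
        (by
          rintro y _ ⟨z, hz, rfl⟩
          obtain ⟨w, hw⟩ := hρ (Pi.single i y)
          exact ⟨w * z, I.mul_mem_left _ hz, by simp [hw]⟩)
        (by
          rintro _ y ⟨z, hz, rfl⟩
          obtain ⟨w, hw⟩ := hρ (Pi.single i y)
          exact ⟨z * w, I.mul_mem_right _ hz, by simp [hw]⟩)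
    have hxi : ρ x i ≠ 0 := by
      intro h0
      apply hcx
      rw [hker, map_mul, hc]
      ext j : 1
      by_cases h : j = i
      · subst h; simp [h0]
      · simp [Pi.single_eq_of_ne h]
    have hone : (1 : Matrix (Fin (d i)) (Fin (d i)) (D i)) ∈ T := by
      apply IsSimpleRing.one_mem_of_ne_zero_mem T hxi
      rw [TwoSidedIdeal.mem_mk']
      exact ⟨x, hx, rfl⟩
    rw [TwoSidedIdeal.mem_mk'] at hone
    obtain ⟨z, hz, hz1⟩ := hone
    have h2 : c i - c i * z ∈ J := by
      rw [hker, map_sub, map_mul, hc, sub_eq_zero]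
      ext j : 1
      by_cases h : j = i
      · subst h; simp [hz1]
      · simp [Pi.single_eq_of_ne h]
    have := I.add_mem (hJI h2) (I.mul_mem_left (c i) hz)
    rwa [sub_add_cancel] at this

/-- `Rk` is simple or zero. -/
def LS (k : R) : Prop := ∀ x : R, x * k ≠ 0 → ∃ s : R, s * (x * k) = k

/-- `kR` is simple or zero. -/
def RS (k : R) : Prop := ∀ x : R, k * x ≠ 0 → ∃ s : R, k * x * s = k

theorem max_inv (M : Ideal R) [hM : M.IsMaximal] {x : R} (hx : x ∉ M) : ∃ s, 1 - s * x ∈ M := by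
  have h := (Ideal.isMaximal_iff.1 hM).2 (M ⊔ Ideal.span {x}) x le_sup_left hx
    (Ideal.mem_sup_right (Ideal.mem_span_singleton_self x))
  obtain ⟨m, hm, y, hy, hmy⟩ := Submodule.mem_sup.1 h
  obtain ⟨s, rfl⟩ := Ideal.mem_span_singleton'.1 hy
  exact ⟨s, by rw [← hmy]; simpa using hm⟩

theorem LS_of_max (M : Ideal R) [hM : M.IsMaximal] {k : R} (h : ∀ m ∈ M, m * k = 0) : LS k := by
  intro x hx
  obtain ⟨s, hs⟩ := max_inv M (x := x) (fun hm => hx (h x hm))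
  refine ⟨s, ?_⟩
  have := h _ hs
  rw [sub_mul, one_mul, sub_eq_zero] at this
  rw [← mul_assoc]; exact this.symm

theorem max_of_LS {k : R} (hk : k ≠ 0) (h : LS k) : (lAnnI R {k}).IsMaximal := by
  rw [Ideal.isMaximal_iff]
  constructor
  · intro h1; apply hk; simpa using h1 k rfl
  · intro I x hI hx hxI
    have hxk : x * k ≠ 0 := by
      intro h0; apply hx; intro y hy; rw [Set.mem_singleton_iff.1 hy, h0]
    obtain ⟨s, hs⟩ := h x hxk
    have h2 : 1 - s * x ∈ I := by
      apply hI
      intro y hy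
      rw [Set.mem_singleton_iff.1 hy, sub_mul, mul_assoc, hs, one_mul, sub_self]
    have := I.add_mem h2 (I.mul_mem_left s hxI)
    rwa [sub_add_cancel] at this

theorem LS_mul {k : R} (h : LS k) (y : R) : LS (k * y) := by
  intro x hx
  have : x * k ≠ 0 := by intro h0; apply hx; rw [← mul_assoc, h0, zero_mul]
  obtain ⟨s, hs⟩ := h x this
  exact ⟨s, by rw [← mul_assoc x, ← mul_assoc s, hs]⟩

theorem mul_LS {k : R} (h : LS k) (y : R) : LS (y * k) := by
  intro x hx
  rw [← mul_assoc] at hx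
  obtain ⟨s, hs⟩ := h _ hx
  exact ⟨y * s, by rw [mul_assoc, ← mul_assoc x, hs]⟩

theorem J_mul_LS {k : R} (h : LS k) {j : R} (hj : j ∈ Ring.jacobson R) : j * k = 0 := by
  by_contra h0
  obtain ⟨s, hs⟩ := h j h0
  obtain ⟨v, hv, -⟩ := jac_unit (Ideal.mul_mem_left _ s hj)
  apply h0
  have : k = 0 := by
    calc k = v * (1 - s * j) * k := by rw [hv, one_mul]
      _ = v * (k - s * (j * k)) := by noncomm_ring
      _ = 0 := by rw [hs]; simp
  rw [this, mul_zero]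

theorem LS_mul_J (hP : IsLeftPInjective R) {k : R} (h : LS k) {j : R}
    (hj : j ∈ Ring.jacobson R) : k * j = 0 := by
  by_cases hk : k = 0
  · rw [hk, zero_mul]
  obtain ⟨r, hr, hr2⟩ := le_sing hP hj k hk
  obtain ⟨s, hs⟩ := h r hr
  rw [← hs, mul_assoc, hr2, mul_zero]

theorem RS_of_LS (hP : IsLeftPInjective R) {k : R} (h : LS k) : RS k := by
  intro x hx
  obtain ⟨s, hs⟩ := (hP (k * x) k).1 (by
    intro u hu
    by_contra h0
    obtain ⟨t, ht⟩ := h u h0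
    apply hx
    rw [← ht, mul_assoc, mul_assoc, hu, mul_zero])
  exact ⟨s, hs.symm⟩

theorem ess_soc (h1 : IsSemisimpleRing (R ⧸ Ring.jacobson R))
    (h2 : ∃ n, Ring.jacobson R ^ n = ⊥) (a : R) (ha : a ≠ 0) : ∃ r, r * a ≠ 0 ∧ LS (r * a) := by
  classical
  have hex : ∃ m, ∀ y ∈ Ring.jacobson R ^ m, y * a = 0 := by
    obtain ⟨n, hn⟩ := h2
    refine ⟨n, ?_⟩
    intro y hy
    rw [hn, Ideal.mem_bot] at hy
    rw [hy, zero_mul]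
  have hspec := Nat.find_spec hex
  rcases hm : Nat.find hex with _ | m
  · rw [hm] at hspec
    exfalso
    apply ha
    have := hspec 1 (by simp [Submodule.pow_zero, Ideal.one_eq_top])
    simpa using this
  · rw [hm] at hspec
    have hmin := Nat.find_min hex (m := m) (by omega)
    push Not at hmin
    obtain ⟨y, hy, hya⟩ := hmin
    have hJ : ∀ j ∈ Ring.jacobson R, j * (y * a) = 0 := by
      intro j hj
      rw [← mul_assoc]
      apply hspec
      rw [Ideal.IsTwoSided.pow_succ]
      exact Ideal.mul_mem_mul hj hy
    have hne : lAnnI R {y * a} ≠ ⊤ := by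
      intro h
      apply hya
      have : (1 : R) ∈ lAnnI R {y * a} := by rw [h]; trivial
      simpa using this _ rfl
    obtain ⟨M, hM, hle⟩ := Ideal.exists_le_maximal _ hne
    obtain ⟨f, hf, hMf⟩ := maxf h1 M
    refine ⟨f * y, ?_, ?_⟩
    · intro h0
      apply hM.ne_top
      rw [Ideal.eq_top_iff_one]
      have hfM : f ∈ M := hle (by
        intro z hz; rw [Set.mem_singleton_iff.1 hz, ← mul_assoc, h0])
      have := M.add_mem hf hfM
      rwa [sub_add_cancel] at this
    · apply LS_of_max M
      intro m hm
      rw [← mul_assoc, ← mul_assoc, mul_assoc (m * f), hJ _ (hMf m hm)]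

/-- The annihilator of `R k`, a two-sided ideal. -/
def bAnn (k : R) : Ideal R where
  carrier := {x | ∀ r, x * r * k = 0}
  add_mem' := fun ha hb r => by rw [add_mul, add_mul, ha r, hb r, add_zero]
  zero_mem' := fun r => by rw [zero_mul, zero_mul]
  smul_mem' := fun c x hx r => by
    show c * x * r * k = 0
    rw [mul_assoc, mul_assoc, ← mul_assoc x, hx r, mul_zero]

theorem bAnn_two (k : R) : (bAnn k).IsTwoSided :=
  ⟨fun {x} b hx r => by rw [mul_assoc x]; exact hx _⟩

theorem kasch [IsNoetherianRing Rᵐᵒᵖ] (hP : IsLeftPInjective R)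
    (h1 : IsSemisimpleRing (R ⧸ Ring.jacobson R))
    (h2 : ∃ n, Ring.jacobson R ^ n = ⊥) (M : Ideal R) (hM : M.IsMaximal) :
    ∃ z : R, z ≠ 0 ∧ ∀ m ∈ M, m * z = 0 := by
  obtain ⟨n, c, hcJ, hsum, hcomm, horth, hidem, hsimp⟩ := blocks h1
  have hiso : ∀ (M : Ideal R) (_ : M.IsMaximal) (j : Fin n) (k : R), LS k → c j ∉ M →
      c j * k ≠ 0 → ∃ u, u * k ≠ 0 ∧ ∀ m ∈ M, m * (u * k) = 0 := by
    intro M hM j k hk hjM hjk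
    obtain ⟨f, hf, hMf⟩ := maxf h1 M
    have hcf : c j * f ∉ Ring.jacobson R := by
      intro h
      apply hjM
      have := M.add_mem (M.mul_mem_left (c j) hf) (Ring.jacobson_le_of_isMaximal M h)
      rwa [← mul_add, sub_add_cancel, mul_one] at this
    have hfk : ∃ r, f * r * k ≠ 0 := by
      by_contra hcon
      push Not at hcon
      have : c j ∈ bAnn k := hsimp j (bAnn k) (bAnn_two k) (by
        intro x hx r
        exact J_mul_LS hk (Ideal.mul_mem_right r _ hx)) f hcon hcf
      apply hjk
      simpa using this 1
    obtain ⟨r, hr⟩ := hfk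
    refine ⟨f * r, hr, ?_⟩
    intro m hm
    rw [← mul_assoc, ← mul_assoc]
    exact J_mul_LS hk (Ideal.mul_mem_right r _ (hMf m hm))
  have hσ : ∀ i, ∃ j k, k ≠ 0 ∧ LS k ∧ c j * k = k ∧ k * c i = k := by
    intro i
    have : ∃ s, LS s ∧ s * c i ≠ 0 := by
      by_contra hcon
      push Not at hcon
      apply hcJ i
      apply sing_le hP
      intro k hk
      obtain ⟨r, hr, hr2⟩ := ess_soc h1 h2 k hk
      exact ⟨r, hr, hcon _ hr2⟩
    obtain ⟨s, hs, hsc⟩ := this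
    have hk1 := LS_mul hs (c i)
    have hk1c : s * c i * c i = s * c i := by
      have := LS_mul_J hP hs (hidem i)
      rw [mul_sub, sub_eq_zero] at this
      rw [mul_assoc, this]
    set k := s * c i
    have hsk : (∑ j, c j * k) = k := by
      have := J_mul_LS hk1 hsum
      rwa [sub_mul, one_mul, sub_eq_zero, Finset.sum_mul] at this
    obtain ⟨j, -, hj⟩ := Finset.exists_ne_zero_of_sum_ne_zero (hsk.symm ▸ hsc : (∑ j, c j * k) ≠ 0)
    refine ⟨j, c j * k, hj, mul_LS hk1 _, ?_, ?_⟩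
    · have := J_mul_LS hk1 (hidem j)
      rwa [sub_mul, sub_eq_zero, mul_assoc] at this
    · rw [mul_assoc, hk1c]
  choose σ k hk0 hkLS hck hkc using hσ
  have hinj : Function.Injective σ := by
    intro i i' hii
    by_contra hne
    have hmax := max_of_LS (hk0 i) (hkLS i)
    obtain ⟨u, hu, huM⟩ := hiso _ hmax (σ i) (k i') (hkLS i') (by
      intro h
      apply hk0 i
      rw [← hck i]
      exact h _ rfl) (by rw [hii, hck]; exact hk0 i')
    have hLSu : LS (u * k i') := mul_LS (hkLS i') u
    have hm2 := max_of_LS hu hLSu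
    have heq : lAnnI R {k i} = lAnnI R {u * k i'} := by
      apply hmax.eq_of_le hm2.ne_top
      intro m hm z hz
      rw [Set.mem_singleton_iff.1 hz]; exact huM m hm
    obtain ⟨v, hv⟩ := (hP (u * k i') (k i)).1 (by
      intro w hw
      have : w ∈ lAnnI R {k i} := by
        rw [heq]; intro z hz; rw [Set.mem_singleton_iff.1 hz, hw]
      exact this _ rfl)
    have hJ : c i' * v * c i ∈ Ring.jacobson R := by
      have h3 := Ideal.mul_mem_right (c i) _ (hcomm i' v)
      have h4 := Ideal.mul_mem_left (Ring.jacobson R) v (horth i' i (Ne.symm hne))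
      have := add_mem h3 h4
      have e : (c i' * v - v * c i') * c i + v * (c i' * c i) = c i' * v * c i := by noncomm_ring
      rwa [e] at this
    apply hk0 i
    calc k i = u * (k i' * c i') * v * c i := by rw [hkc i', ← hv, hkc i]
      _ = u * (k i' * (c i' * v * c i)) := by noncomm_ring
      _ = 0 := by rw [LS_mul_J hP (hkLS i') hJ, mul_zero]
  have hsurj := Finite.injective_iff_surjective.1 hinj
  have hj : ∃ j, c j ∉ M := by
    by_contra hcon
    push Not at hcon
    apply hM.ne_top
    rw [Ideal.eq_top_iff_one]
    have h3 := M.sub_mem (M.sum_mem (fun i (_ : i ∈ Finset.univ) => hcon i))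
      (Ring.jacobson_le_of_isMaximal M hsum)
    rwa [sub_sub_cancel] at h3
  obtain ⟨j, hjM⟩ := hj
  obtain ⟨i, rfl⟩ := hsurj j
  obtain ⟨u, hu, huM⟩ := hiso M hM (σ i) (k i) (hkLS i) hjM (by rw [hck]; exact hk0 i)
  exact ⟨_, hu, huM⟩

theorem LS_of_RS (hP : IsLeftPInjective R)
    (hK : ∀ M : Ideal R, M.IsMaximal → ∃ z : R, z ≠ 0 ∧ ∀ m ∈ M, m * z = 0)
    {k : R} (h : RS k) : LS k := by
  by_cases hk : k = 0
  · intro x hx; rw [hk, mul_zero] at hx; exact absurd rfl hx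
  have hne : lAnnI R {k} ≠ ⊤ := by
    intro h
    apply hk
    have : (1 : R) ∈ lAnnI R {k} := by rw [h]; trivial
    simpa using this _ rfl
  obtain ⟨M, hM, hle⟩ := Ideal.exists_le_maximal _ hne
  obtain ⟨z, hz, hMz⟩ := hK M hM
  obtain ⟨y, hy⟩ := (hP k z).1 (by
    intro u hu
    apply hMz
    apply hle
    intro w hw; rw [Set.mem_singleton_iff.1 hw, hu])
  obtain ⟨s, hs⟩ := h y (by rwa [← hy])
  apply LS_of_max M
  intro m hm
  rw [← hs, ← hy, ← mul_assoc, hMz m hm, zero_mul]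

theorem right_min (hP : IsLeftPInjective R) (hmincs : IsLeftMinCS R)
    (hK : ∀ M : Ideal R, M.IsMaximal → ∃ z : R, z ≠ 0 ∧ ∀ m ∈ M, m * z = 0)
    {k k' : R} (h : LS k) (hr : ∀ x, k * x = 0 → k' * x = 0) : ∃ d, k' = d * k := by
  by_cases hk' : k' = 0
  · exact ⟨0, by rw [hk', zero_mul]⟩
  have hk : k ≠ 0 := by
    rintro rfl
    apply hk'; simpa using hr 1 (by simp)
  have hRS := RS_of_LS hP h
  have hRS' : RS k' := by
    intro x hx
    obtain ⟨s, hs⟩ := hRS x (fun h0 => hx (hr x h0))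
    refine ⟨s, ?_⟩
    have := hr (x * s - 1) (by rw [mul_sub, ← mul_assoc, hs, mul_one, sub_self])
    rwa [mul_sub, ← mul_assoc, mul_one, sub_eq_zero] at this
  have hLS' := LS_of_RS hP hK hRS'
  have hsimple : IsSimpleModule R (Ideal.span {k} : Ideal R) := by
    rw [isSimpleModule_iff_isAtom]
    constructor
    · intro h0
      exact hk (Ideal.span_singleton_eq_bot.1 h0)
    · intro b hb
      by_contra hb0
      obtain ⟨y, hy, hy0⟩ := Submodule.exists_mem_ne_zero_of_ne_bot hb0
      obtain ⟨x, rfl⟩ := Ideal.mem_span_singleton'.1 (hb.le hy)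
      obtain ⟨s, hs⟩ := h x hy0
      apply hb.not_ge
      rw [Ideal.span_singleton_le_iff_mem, ← hs]
      exact b.smul_mem s hy
  obtain ⟨K, ⟨K', hKK⟩, hle, hess⟩ := hmincs _ hsimple
  have hkK : k ∈ K := hle (Ideal.mem_span_singleton_self k)
  have h1 : (1 : R) ∈ K ⊔ K' := by rw [hKK.sup_eq_top]; trivial
  obtain ⟨f, hf, g, hg, hfg⟩ := Submodule.mem_sup.1 h1
  have hg1 : g = 1 - f := eq_sub_of_add_eq' hfg
  have hkg : k * g = 0 := by
    have h2 : k * g ∈ K ⊓ K' := by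
      refine ⟨?_, K'.mul_mem_left _ hg⟩
      have : k * g = k - k * f := by rw [hg1, mul_sub, mul_one]
      rw [this]
      exact K.sub_mem hkK (K.mul_mem_left _ hf)
    rw [hKK.inf_eq_bot] at h2
    exact h2
  have hk'K : k' ∈ K := by
    have : k' = k' * f := by
      have := hr g hkg
      rw [hg1, mul_sub, mul_one, sub_eq_zero] at this
      exact this
    rw [this]
    exact K.mul_mem_left _ hf
  have hne : Ideal.span {k'} ⊓ Ideal.span {k} ≠ ⊥ := by
    intro h0
    have := hess _ ((Ideal.span_singleton_le_iff_mem _).2 hk'K) h0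
    exact hk' (Ideal.span_singleton_eq_bot.1 this)
  obtain ⟨w, ⟨hw1, hw2⟩, hw0⟩ := Submodule.exists_mem_ne_zero_of_ne_bot hne
  obtain ⟨x, rfl⟩ := Ideal.mem_span_singleton'.1 hw1
  obtain ⟨y, hy⟩ := Ideal.mem_span_singleton'.1 hw2
  obtain ⟨s, hs⟩ := hLS' x hw0
  exact ⟨s * y, by rw [mul_assoc, hy, hs]⟩

end Kasch

section Fin
variable {R : Type*} [Ring R]

theorem covR {I₀ I : RIdeal R} (h : I₀ ⋖ I) {b : R} (hb : b ∈ I) (hb0 : b ∉ I₀) :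
    ∀ y ∈ I, ∃ z ∈ I₀, ∃ v, y = z + b * v := by
  have hle : I ≤ I₀ ⊔ Submodule.span Rᵐᵒᵖ {b} := by
    by_contra hn
    have h1 : I₀ < I₀ ⊔ Submodule.span Rᵐᵒᵖ {b} := by
      refine lt_of_le_of_ne le_sup_left ?_
      intro he
      apply hb0
      rw [he]
      exact Submodule.mem_sup_right (Submodule.mem_span_singleton_self b)
    have h2 : I₀ ⊔ Submodule.span Rᵐᵒᵖ {b} ≤ I :=
      sup_le h.le ((Submodule.span_singleton_le_iff_mem _ _).2 hb)
    exact h.2 h1 (lt_of_le_not_ge h2 hn)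
  intro y hy
  obtain ⟨z, hz, w, hw, rfl⟩ := Submodule.mem_sup.1 (hle hy)
  obtain ⟨v, rfl⟩ := Submodule.mem_span_singleton.1 hw
  exact ⟨z, hz, v.unop, rfl⟩

theorem covL {I₀ I : Ideal R} (h : I₀ ⋖ I) {b : R} (hb : b ∈ I) (hb0 : b ∉ I₀) :
    ∀ y ∈ I, ∃ z ∈ I₀, ∃ v, y = z + v * b := by
  have hle : I ≤ I₀ ⊔ Submodule.span R {b} := by
    by_contra hn
    have h1 : I₀ < I₀ ⊔ Submodule.span R {b} := by
      refine lt_of_le_of_ne le_sup_left ?_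
      intro he
      apply hb0
      rw [he]
      exact Submodule.mem_sup_right (Submodule.mem_span_singleton_self b)
    have h2 : I₀ ⊔ Submodule.span R {b} ≤ I :=
      sup_le h.le ((Submodule.span_singleton_le_iff_mem _ _).2 hb)
    exact h.2 h1 (lt_of_le_not_ge h2 hn)
  intro y hy
  obtain ⟨z, hz, w, hw, rfl⟩ := Submodule.mem_sup.1 (hle hy)
  obtain ⟨v, rfl⟩ := Submodule.mem_span_singleton.1 hw
  exact ⟨z, hz, v, rfl⟩

theorem mulR (I : RIdeal R) {b : R} (hb : b ∈ I) (x : R) : b * x ∈ I :=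
  I.smul_mem (MulOpposite.op x) hb

theorem midR {I₀ I : RIdeal R} (h : I₀ ⋖ I) {b c : R} (hb : b ∈ I)
    (hc : ∀ y ∈ I₀, c * y = 0) (hk : c * b ≠ 0) :
    RS (c * b) ∧ ∀ x, c * b * x = 0 → b * x ∈ I₀ := by
  have hb0 : b ∉ I₀ := fun h0 => hk (hc b h0)
  constructor
  · intro x hx
    have hx0 : b * x ∉ I₀ := fun h0 => hx (by rw [mul_assoc]; exact hc _ h0)
    obtain ⟨z, hz, v, hv⟩ := covR h (mulR I hb x) hx0 b hb
    refine ⟨v, ?_⟩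
    have : c * b = c * (z + b * x * v) := congrArg (c * ·) hv
    rw [mul_add, hc z hz, zero_add] at this
    rw [mul_assoc, mul_assoc, ← mul_assoc b]
    exact this.symm
  · intro x hx
    by_contra hx0
    obtain ⟨z, hz, v, hv⟩ := covR h (mulR I hb x) hx0 b hb
    apply hk
    rw [hv, mul_add, hc z hz, zero_add, ← mul_assoc, ← mul_assoc, hx, zero_mul]

theorem midL {I₀ I : Ideal R} (h : I₀ ⋖ I) {b c : R} (hb : b ∈ I)
    (hc : ∀ y ∈ I₀, y * c = 0) (hk : b * c ≠ 0) :
    LS (b * c) ∧ ∀ x, x * (b * c) = 0 → x * b ∈ I₀ := by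
  have hb0 : b ∉ I₀ := fun h0 => hk (hc b h0)
  constructor
  · intro x hx
    have hx0 : x * b ∉ I₀ := fun h0 => hx (by rw [← mul_assoc]; exact hc _ h0)
    obtain ⟨z, hz, v, hv⟩ := covL h (I.mul_mem_left x hb) hx0 b hb
    refine ⟨v, ?_⟩
    have : b * c = (z + v * (x * b)) * c := congrArg (· * c) hv
    rw [add_mul, hc z hz, zero_add] at this
    rw [← mul_assoc, ← mul_assoc, mul_assoc v]
    exact this.symm
  · intro x hx
    by_contra hx0
    obtain ⟨z, hz, v, hv⟩ := covL h (I.mul_mem_left x hb) hx0 b hb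
    apply hk
    rw [hv, add_mul, hc z hz, zero_add, mul_assoc, mul_assoc, hx, mul_zero]

theorem rl_eq [IsNoetherian Rᵐᵒᵖ R] [IsArtinian Rᵐᵒᵖ R] (hP : IsLeftPInjective R)
    (hLS : ∀ k : R, RS k → LS k)
    (hrm : ∀ k k' : R, LS k → (∀ x, k * x = 0 → k' * x = 0) → ∃ d, k' = d * k)
    (I : RIdeal R) : ∀ x, (∀ u, (∀ y ∈ I, u * y = 0) → u * x = 0) → x ∈ I := by
  induction I using WellFoundedLT.induction with
  | ind I ih =>
  intro x hx
  by_cases hI : I = ⊥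
  · have := hx 1 (by intro y hy; rw [hI, Submodule.mem_bot] at hy; rw [hy, mul_zero])
    rw [one_mul] at this
    rw [this]; exact I.zero_mem
  obtain ⟨I₀, h0⟩ := exists_covBy_of_wellFoundedGT (α := RIdeal R) (a := I)
    (by rwa [isMin_iff_eq_bot])
  obtain ⟨b, hb, hb0⟩ := SetLike.exists_of_lt h0.lt
  have hspan := covR h0 hb hb0
  have hex : ∃ c, (∀ y ∈ I₀, c * y = 0) ∧ c * b ≠ 0 := by
    by_contra hn
    push Not at hn
    exact hb0 (ih I₀ h0.lt b hn)
  obtain ⟨c, hc, hk⟩ := hex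
  obtain ⟨hRS, hin⟩ := midR h0 hb hc hk
  have hls := hLS _ hRS
  have hkill : ∀ u, (∀ y ∈ I₀, u * y = 0) → u * b = 0 → ∀ y ∈ I, u * y = 0 := by
    intro u hu hub y hy
    obtain ⟨z, hz, v, rfl⟩ := hspan y hy
    rw [mul_add, hu z hz, zero_add, ← mul_assoc, hub, zero_mul]
  obtain ⟨v, hv⟩ := (hP (c * b) (c * x)).1 (by
    intro u hu
    rw [← mul_assoc]
    apply hx
    apply hkill
    · intro y hy; rw [mul_assoc, hc y hy, mul_zero]
    · rw [mul_assoc, hu])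
  have hmem : x - b * v ∈ I₀ := by
    apply ih I₀ h0.lt
    intro c' hc'
    obtain ⟨d, hd⟩ := hrm (c * b) (c' * b) hls (by
      intro t ht
      rw [mul_assoc]; exact hc' _ (hin t ht))
    have h1 : (c' - d * c) * x = 0 := by
      apply hx
      apply hkill
      · intro y hy; rw [sub_mul, hc' y hy, mul_assoc, hc y hy, mul_zero, sub_zero]
      · rw [sub_mul, hd, mul_assoc, sub_self]
    rw [sub_mul, sub_eq_zero] at h1
    rw [mul_sub, h1, ← mul_assoc, hd, mul_assoc, hv]
    simp only [mul_assoc, sub_self]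
  have := I.add_mem (h0.le hmem) (mulR I hb v)
  rwa [sub_add_cancel] at this

theorem left_noeth [IsNoetherian Rᵐᵒᵖ R] [IsArtinian Rᵐᵒᵖ R]
    (hLS : ∀ k : R, RS k → LS k)
    (hrm : ∀ k k' : R, LS k → (∀ x, k * x = 0 → k' * x = 0) → ∃ d, k' = d * k)
    (I : RIdeal R) : IsNoetherian R (lAnnI R (I : Set R)) := by
  induction I using WellFoundedGT.induction with
  | ind I ih =>
  by_cases hI : I = ⊤
  · have : lAnnI R (I : Set R) = ⊥ := by
      rw [eq_bot_iff]
      intro x hx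
      have := hx 1 (by rw [hI]; trivial)
      rwa [mul_one] at this
    rw [this]; infer_instance
  obtain ⟨I', h0⟩ := exists_covBy_of_wellFoundedLT (α := RIdeal R) (a := I)
    (by rwa [isMax_iff_eq_top])
  obtain ⟨b, hb, hb0⟩ := SetLike.exists_of_lt h0.lt
  have hspan := covR h0 hb hb0
  have hN := ih I' h0.lt
  have hle : lAnnI R (I' : Set R) ≤ lAnnI R (I : Set R) := fun x hx y hy => hx y (h0.le hy)
  let g : lAnnI R (I : Set R) →ₗ[R] R :=
    (LinearMap.toSpanSingleton R R b).comp (lAnnI R (I : Set R)).subtype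
  have hg : ∀ x, g x = (x : R) * b := fun x => rfl
  have hnr : IsNoetherian R (LinearMap.range g) := by
    by_cases hz : ∀ c ∈ lAnnI R (I : Set R), c * b = 0
    · have : LinearMap.range g = ⊥ := by
        rw [LinearMap.range_eq_bot]; ext x; exact hz x x.2
      rw [this]; infer_instance
    · push Not at hz
      obtain ⟨c, hc, hk⟩ := hz
      obtain ⟨hRS, hin⟩ := midR h0 hb hc hk
      have hls := hLS _ hRS
      have hs : IsSimpleModule R (LinearMap.range g) := by
        rw [isSimpleModule_iff_isAtom]
        constructor
        · intro hbot
          rw [LinearMap.range_eq_bot] at hbot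
          exact hk (LinearMap.congr_fun hbot ⟨c, hc⟩)
        · intro B hB
          by_contra hB0
          obtain ⟨y, hy, hy0⟩ := Submodule.exists_mem_ne_zero_of_ne_bot hB0
          have key : ∀ c', c' ∈ lAnnI R (I : Set R) → ∃ d, c' * b = d * (c * b) := by
            intro c' hc'
            apply hrm _ _ hls
            intro t ht
            rw [mul_assoc]; exact hc' _ (hin t ht)
          obtain ⟨w, rfl⟩ := hB.le hy
          obtain ⟨d, hd⟩ := key w w.2
          rw [hg] at hy hy0
          rw [hd] at hy hy0
          obtain ⟨s, hs⟩ := hls d hy0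
          apply hB.not_ge
          rintro _ ⟨c', rfl⟩
          obtain ⟨e, he⟩ := key c' c'.2
          rw [hg, he, ← hs]
          exact B.smul_mem e (B.smul_mem s hy)
      infer_instance
  refine isNoetherian_of_range_eq_ker (Submodule.inclusion hle) g.rangeRestrict ?_
  ext x
  rw [LinearMap.ker_rangeRestrict, LinearMap.mem_ker, hg, Submodule.range_inclusion]
  constructor
  · intro hx
    exact hx b hb
  · intro hx y hy
    obtain ⟨z, hz, v, rfl⟩ := hspan y hy
    rw [Submodule.subtype_apply, mul_add, x.2 z hz, zero_add, ← mul_assoc, hx, zero_mul]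

theorem lr_eq [IsNoetherianRing R] [IsArtinian R R] (hP : IsLeftPInjective R)
    (hrm : ∀ k k' : R, LS k → (∀ x, k * x = 0 → k' * x = 0) → ∃ d, k' = d * k)
    (I : Ideal R) : ∀ x, (∀ u, (∀ y ∈ I, y * u = 0) → x * u = 0) → x ∈ I := by
  induction I using WellFoundedLT.induction with
  | ind I ih =>
  intro x hx
  by_cases hI : I = ⊥
  · have := hx 1 (by intro y hy; rw [hI, Submodule.mem_bot] at hy; rw [hy, zero_mul])
    rw [mul_one] at this
    rw [this]; exact I.zero_mem
  obtain ⟨I₀, h0⟩ := exists_covBy_of_wellFoundedGT (α := Ideal R) (a := I)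
    (by rwa [isMin_iff_eq_bot])
  obtain ⟨b, hb, hb0⟩ := SetLike.exists_of_lt h0.lt
  have hspan := covL h0 hb hb0
  have hex : ∃ c, (∀ y ∈ I₀, y * c = 0) ∧ b * c ≠ 0 := by
    by_contra hn
    push Not at hn
    exact hb0 (ih I₀ h0.lt b hn)
  obtain ⟨c, hc, hk⟩ := hex
  obtain ⟨hls, hin⟩ := midL h0 hb hc hk
  have hkill : ∀ u, (∀ y ∈ I₀, y * u = 0) → b * u = 0 → ∀ y ∈ I, y * u = 0 := by
    intro u hu hub y hy
    obtain ⟨z, hz, v, rfl⟩ := hspan y hy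
    rw [add_mul, hu z hz, zero_add, mul_assoc, hub, mul_zero]
  obtain ⟨v, hv⟩ := hrm (b * c) (x * c) hls (by
    intro u hu
    rw [mul_assoc]
    apply hx
    apply hkill
    · intro y hy; rw [← mul_assoc, hc y hy, zero_mul]
    · rw [← mul_assoc, hu])
  have hmem : x - v * b ∈ I₀ := by
    apply ih I₀ h0.lt
    intro c' hc'
    obtain ⟨d, hd⟩ := (hP (b * c) (b * c')).1 (by
      intro t ht
      rw [← mul_assoc]; exact hc' _ (hin t ht))
    have h1 : x * (c' - c * d) = 0 := by
      apply hx
      apply hkill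
      · intro y hy; rw [mul_sub, hc' y hy, ← mul_assoc, hc y hy, zero_mul, sub_zero]
      · rw [mul_sub, hd, mul_assoc, sub_self]
    rw [mul_sub, sub_eq_zero] at h1
    rw [sub_mul, h1, mul_assoc v, hd, ← mul_assoc, hv]
    simp only [mul_assoc, sub_self]
  have := I.add_mem (h0.le hmem) (I.mul_mem_left v hb)
  rwa [sub_add_cancel] at this

theorem inj_of [IsNoetherianRing R] (hP : IsLeftPInjective R)
    (hrl : ∀ (I : RIdeal R) x, (∀ u, (∀ y ∈ I, u * y = 0) → u * x = 0) → x ∈ I)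
    (hlr : ∀ (I : Ideal R) x, (∀ u, (∀ y ∈ I, y * u = 0) → x * u = 0) → x ∈ I) :
    Module.Injective R R := by
  apply Module.Baer.injective
  have main : ∀ L : Ideal R, L.FG → ∀ f : L →ₗ[R] R, ∃ s : R, ∀ x : L, f x = (x : R) * s := by
    intro L hL
    induction L, hL using Submodule.fg_induction with
    | singleton b =>
      intro f
      have hb : b ∈ (Submodule.span R {b} : Ideal R) := Submodule.mem_span_singleton_self b
      obtain ⟨s, hs⟩ := (hP b (f ⟨b, hb⟩)).1 (by
        intro u hu
        rw [← smul_eq_mul, ← map_smul]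
        have : u • (⟨b, hb⟩ : (Submodule.span R {b} : Ideal R)) = 0 := Subtype.ext hu
        rw [this, map_zero])
      refine ⟨s, ?_⟩
      rintro ⟨x, hx⟩
      obtain ⟨u, rfl⟩ := Submodule.mem_span_singleton.1 hx
      have : (⟨u • b, hx⟩ : (Submodule.span R {b} : Ideal R)) = u • ⟨b, hb⟩ := rfl
      rw [this, map_smul, hs]
      simp [mul_assoc]
    | sup A B hA hB ihA ihB =>
      intro f
      obtain ⟨s, hs⟩ := ihA (f.comp (Submodule.inclusion le_sup_left))
      obtain ⟨t, ht⟩ := ihB (f.comp (Submodule.inclusion le_sup_right))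
      have hst : s - t ∈ rAnnI R (A : Set R) ⊔ rAnnI R (B : Set R) := by
        apply hrl
        intro w hw
        have hwA : w ∈ A := hlr A w (fun u hu => hw u (Submodule.mem_sup_left hu))
        have hwB : w ∈ B := hlr B w (fun u hu => hw u (Submodule.mem_sup_right hu))
        have e1 := hs ⟨w, hwA⟩
        have e2 := ht ⟨w, hwB⟩
        rw [mul_sub, sub_eq_zero]
        exact e1.symm.trans e2
      obtain ⟨u, hu, v, hv, huv⟩ := Submodule.mem_sup.1 hst
      refine ⟨s - u, ?_⟩
      rintro ⟨x, hx⟩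
      obtain ⟨a, ha, b, hb, rfl⟩ := Submodule.mem_sup.1 hx
      have e : (⟨a + b, hx⟩ : (A ⊔ B : Ideal R)) =
        Submodule.inclusion le_sup_left ⟨a, ha⟩ + Submodule.inclusion le_sup_right ⟨b, hb⟩ := rfl
      have e1 : f (Submodule.inclusion le_sup_left ⟨a, ha⟩) = a * s := hs ⟨a, ha⟩
      have e2 : f (Submodule.inclusion le_sup_right ⟨b, hb⟩) = b * t := ht ⟨b, hb⟩
      have h3 : a * u = 0 := hu a ha
      have h4 : b * v = 0 := hv b hb
      have h5 : s - u = t + v := by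
        rw [sub_eq_iff_eq_add, add_assoc, add_comm v u, huv]; abel
      rw [e, map_add, e1, e2]
      show a * s + b * t = (a + b) * (s - u)
      rw [add_mul, mul_sub, h3, sub_zero, h5, mul_add, h4, add_zero]
  intro L f
  obtain ⟨s, hs⟩ := main L (IsNoetherian.noetherian L) f
  exact ⟨LinearMap.toSpanSingleton R R s, fun x hx => (hs ⟨x, hx⟩).symm⟩

end Fin

theorem final (R : Type*) [Ring R] [IsNoetherianRing Rᵐᵒᵖ] (hP : IsLeftPInjective R)
    (hmincs : IsLeftMinCS R)
    (hC : ∀ C : Ideal R, IsComplementLeftIdeal R C → C ≠ ⊥ → ¬ IsSmallLeftIdeal R C) :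
    IsQuasiFrobenius R := by
  have h1 := ss_quot hP hC
  have h2 := jac_nilp hP
  have hK := kasch hP h1 h2
  have hLS : ∀ k : R, RS k → LS k := fun k h => LS_of_RS hP hK h
  have hrm : ∀ k k' : R, LS k → (∀ x, k * x = 0 → k' * x = 0) → ∃ d, k' = d * k :=
    fun k k' h hr => right_min hP hmincs hK h hr
  have := noeth_R (R := R)
  have := artin_R h1 h2
  have hN0 := left_noeth hLS hrm (⊥ : RIdeal R)
  have htop : lAnnI R ((⊥ : RIdeal R) : Set R) = ⊤ := by
    rw [eq_top_iff]
    intro x _ y hy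
    have : y = 0 := hy
    rw [this, mul_zero]
  rw [htop] at hN0
  have hN : IsNoetherianRing R := isNoetherian_of_linearEquiv (Submodule.topEquiv (R := R) (M := R))
  have : IsSemiprimaryRing R := ⟨h1, h2⟩
  have : IsArtinian R R := IsSemiprimaryRing.isNoetherian_iff_isArtinian.1 hN
  exact ⟨hN, inj_of hP (rl_eq hP hLS hrm) (lr_eq hP hrm)⟩

end Stmt9

/-- Right noetherian, left P-injective, left min-CS, nonzero complement left ideals
not small imply QF. -/
theorem stmt9 (R : Type*) [Ring R] [IsNoetherianRing Rᵐᵒᵖ] (hP : IsLeftPInjective R)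
    (hmincs : IsLeftMinCS R)
    (hC : ∀ C : Ideal R, IsComplementLeftIdeal R C → C ≠ ⊥ → ¬ IsSmallLeftIdeal R C) :
    IsQuasiFrobenius R := by
  exact Stmt9.final R hP hmincs hC
end

section
/- If R is right noetherian, left CS, and left P-injective, then R is quasi-Frobenius. -/
section helpers
variable {R : Type*} [Ring R]

/-- elementwise left singular -/
def ZZ (x : R) : Prop := ∀ y : R, y ≠ 0 → ∃ r : R, r * y ≠ 0 ∧ r * y * x = 0

/-- idempotent generating a uniform left ideal -/
def UU (e : R) : Prop := e * e = e ∧ e ≠ 0 ∧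
  ∀ a b : R, a * e ≠ 0 → b * e ≠ 0 → ∃ r s : R, r * (a * e) = s * (b * e) ∧ r * (a * e) ≠ 0

def PI (R : Type*) [Ring R] : Prop :=
  ∀ a x : R, (∀ u : R, u * a = 0 → u * x = 0) → ∃ s : R, x = a * s

lemma ZZ.add {x y : R} (hx : ZZ x) (hy : ZZ y) : ZZ (x + y) := by
  intro w hw
  obtain ⟨r, hr, h1⟩ := hx w hw
  obtain ⟨s, hs, h2⟩ := hy _ hr
  refine ⟨s * r, by rwa [mul_assoc], ?_⟩
  rw [mul_add]
  have : s * r * w * x = s * (r * w * x) := by simp [mul_assoc]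
  rw [this, h1]
  simpa [mul_assoc] using h2

lemma ZZ.zero : ZZ (0 : R) := fun y hy => ⟨1, by simpa using hy, by simp⟩

lemma ZZ.mul_right {x : R} (hx : ZZ x) (r : R) : ZZ (x * r) := by
  intro w hw
  obtain ⟨s, hs, h1⟩ := hx w hw
  exact ⟨s, hs, by rw [← mul_assoc, h1, zero_mul]⟩

lemma ZZ.mul_left {x : R} (hx : ZZ x) (r : R) : ZZ (r * x) := by
  intro w hw
  by_cases h : w * r = 0
  · exact ⟨1, by simpa using hw, by rw [one_mul, ← mul_assoc, h, zero_mul]⟩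
  · obtain ⟨s, hs, h1⟩ := hx _ h
    refine ⟨s, fun h0 => hs (by rw [← mul_assoc, h0, zero_mul]), ?_⟩
    simpa [mul_assoc] using h1

lemma ZZ.of_sum {l : List R} (h : ∀ x ∈ l, ZZ x) : ZZ l.sum := by
  induction l with
  | nil => simpa using ZZ.zero
  | cons a l ih =>
    rw [List.sum_cons]
    exact (h a (by simp)).add (ih fun x hx => h x (by simp [hx]))

lemma UU.not_ZZ {e : R} (he : UU e) : ¬ ZZ e := by
  intro h
  obtain ⟨r, hr, h1⟩ := h e he.2.1
  rw [mul_assoc, he.1] at h1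
  exact hr h1

lemma F1 (hP : PI R) {e x : R} (he : UU e) (hx : e * x = x) (hz : ¬ ZZ x) : ∃ r, e = x * r := by
  apply hP
  intro y hy
  by_contra hye
  apply hz
  intro w hw
  by_cases h : w * e = 0
  · exact ⟨1, by simpa using hw, by rw [one_mul, ← hx, ← mul_assoc, h, zero_mul]⟩
  obtain ⟨r, s, h1, h2⟩ := he.2.2 w y h hye
  refine ⟨r, fun h0 => h2 (by rw [← mul_assoc, h0, zero_mul]), ?_⟩
  rw [← hx]
  have : r * w * (e * x) = (r * (w * e)) * x := by simp [mul_assoc]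
  rw [this, h1]
  have : s * (y * e) * x = s * (y * (e * x)) := by simp [mul_assoc]
  rw [this, hx, hy, mul_zero]

lemma prim {e f : R} (he : UU e) (h1 : e * f = f) (h2 : f * e = f) (hf : f * f = f) (h0 : f ≠ 0) :
    f = e := by
  by_contra hne
  obtain ⟨r, s, h3, h4⟩ := he.2.2 f (e - f) (by rwa [h2]) (by
    rw [sub_mul, he.1, h2]; exact fun h => hne (sub_eq_zero.1 h).symm)
  rw [h2, sub_mul, he.1, h2] at h3
  rw [h2] at h4
  apply h4
  have : r * f * f = s * (e - f) * f := by rw [h3]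
  rw [mul_assoc, hf, mul_assoc, sub_mul, h1, hf, sub_self, mul_zero] at this
  exact this

lemma exists_left {l : List R} (hl : l.sum = 1) {x : R} (hx : ¬ ZZ x) : ∃ e ∈ l, ¬ ZZ (e * x) := by
  by_contra! h
  apply hx
  rw [← one_mul x, ← hl, ← List.map_id l, ← List.sum_map_mul_right]
  apply ZZ.of_sum
  simpa using h

lemma exists_left0 {l : List R} (hl : l.sum = 1) {x : R} (hx : x ≠ 0) : ∃ e ∈ l, e * x ≠ 0 := by
  by_contra! h
  apply hx
  rw [← one_mul x, ← hl, ← List.map_id l, ← List.sum_map_mul_right]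
  apply List.sum_eq_zero
  simpa using h

lemma F2 (hP : PI R) {l : List R} (hl : l.sum = 1) (hU : ∀ e ∈ l, UU e) {e x : R} (he : UU e)
    (hx : x * e = x) (hz : ¬ ZZ x) : ∃ s, e = s * x := by
  obtain ⟨j, hj, hjx⟩ := exists_left hl hz
  have hjj := hU j hj
  obtain ⟨t, ht⟩ := F1 hP hjj (by rw [← mul_assoc, hjj.1]) hjx
  have key : e * t * j * x = e := by
    apply prim he
    · simp only [← mul_assoc, he.1]
    · rw [mul_assoc, hx]
    · have : e * t * j * x * (e * t * j * x) = e * t * (j * (x * e) * t) * j * x := by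
        simp [mul_assoc]
      rw [this, hx, ← ht]
      rw [mul_assoc (e * t) j j, hjj.1]
    · intro h0
      have : j * x * (e * t * j * x) * t = j := by
        have : j * x * (e * t * j * x) * t = (j * (x * e) * t) * (j * x * t) := by simp [mul_assoc]
        rw [this, hx, ← ht, hjj.1]
      rw [h0] at this
      apply hjj.2.1
      simpa using this.symm
  exact ⟨e * t * j, key.symm⟩

lemma split (hP : PI R)
    (hCS : ∀ I : Ideal R, ∃ f : R, f * f = f ∧ (∀ x ∈ I, x * f = x) ∧ ∀ y, y * f ≠ 0 → ∃ r, r * (y * f) ≠ 0 ∧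
      r * (y * f) ∈ I) {e : R} (he : e * e = e) (h0 : e ≠ 0) (hn : ¬ UU e) :
    ∃ g, g * g = g ∧ e * g = g ∧ g * e = g ∧ g ≠ 0 ∧ g ≠ e := by
  unfold UU at hn
  push Not at hn
  obtain ⟨a, b, ha, hb, hab⟩ := hn he h0
  obtain ⟨f, hff0, hf1, hf2⟩ := hCS (Ideal.span {a * e})
  have haf : a * e * f = a * e := hf1 _ (Ideal.subset_span rfl)
  obtain ⟨s, hs⟩ := hP (f * e) f (by
    intro u hu
    by_contra hne
    obtain ⟨r, hr, hrI⟩ := hf2 u hne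
    obtain ⟨t, ht⟩ := Ideal.mem_span_singleton'.1 hrI
    apply hr
    have h1 : r * (u * f) * e = r * (u * f) := by
      rw [← ht]; simp [mul_assoc, he]
    rw [← h1]
    have : r * (u * f) * e = r * (u * (f * e)) := by simp [mul_assoc]
    rw [this, hu, mul_zero])
  have hag : a * e * (e * s * f * e) = a * e := by
    have h1 : a * e * f * (e * s * f * e) = a * e * (f * e * s) * f * e := by simp [mul_assoc]
    rw [haf, ← hs, haf, haf, mul_assoc a e e, he] at h1
    exact h1
  have hff : f * f * e = f * e := by
    rw [hff0]
  refine ⟨e * s * f * e, ?_, ?_, ?_, ?_, ?_⟩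
  · have : e * s * f * e * (e * s * f * e) = e * s * (f * (e * e) * s) * f * e := by
      simp [mul_assoc]
    rw [this, he, ← hs, mul_assoc (e * s) f f, mul_assoc (e * s), hff]
    simp [mul_assoc]
  · simp only [← mul_assoc, he]
  · rw [mul_assoc, he]
  · intro h
    rw [h, mul_zero] at hag
    exact ha hag.symm
  · intro h
    have hbg : b * e * (e * s * f * e) = b * e := by rw [h, mul_assoc, he]
    have hy : b * e * (e * s) * f ≠ 0 := by
      intro h1
      apply hb
      rw [← hbg]
      have : b * e * (e * s * f * e) = b * e * (e * s) * f * e := by simp [mul_assoc]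
      rw [this, h1, zero_mul]
    obtain ⟨r, hr, hrI⟩ := hf2 _ hy
    obtain ⟨t, ht⟩ := Ideal.mem_span_singleton'.1 hrI
    have h2 : r * (b * e) = t * (a * e) := by
      rw [← hbg]
      have : r * (b * e * (e * s * f * e)) = r * (b * e * (e * s) * f) * e := by simp [mul_assoc]
      rw [this, ← ht]
      simp [mul_assoc, he]
    have h3 := hab t r h2.symm
    rw [← ht] at hr
    exact hr h3

lemma decomp [IsNoetherianRing Rᵐᵒᵖ] (hP : PI R)
    (hCS : ∀ I : Ideal R, ∃ f : R, f * f = f ∧ (∀ x ∈ I, x * f = x) ∧ ∀ y, y * f ≠ 0 →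
      ∃ r, r * (y * f) ≠ 0 ∧ r * (y * f) ∈ I) :
    ∃ l : List R, l.sum = 1 ∧ ∀ e ∈ l, UU e := by
  have hN : IsNoetherian Rᵐᵒᵖ R :=
    isNoetherian_of_linearEquiv (MulOpposite.opLinearEquiv Rᵐᵒᵖ : R ≃ₗ[Rᵐᵒᵖ] Rᵐᵒᵖ).symm
  let T : R → Submodule Rᵐᵒᵖ R := fun e => Submodule.span Rᵐᵒᵖ {1 - e}
  suffices H : ∀ N : Submodule Rᵐᵒᵖ R, ∀ e : R, e * e = e → T e = N →
      ∃ l : List R, l.sum = e ∧ ∀ e ∈ l, UU e from H _ 1 (one_mul 1) rfl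
  intro N
  induction N using WellFoundedGT.induction with
  | ind N ih =>
  intro e he hT
  by_cases h0 : e = 0
  · exact ⟨[], by simp [h0], by simp⟩
  by_cases hU : UU e
  · exact ⟨[e], by simp, by simpa using hU⟩
  obtain ⟨g, hg, h1, h2, h3, h4⟩ := split hP hCS he h0 hU
  have lt : ∀ g, e * g = g → g * e = g → g * g = g → g ≠ e → N < T g := by
    intro g h1 h2 hg h4
    rw [← hT]
    refine lt_of_le_of_ne ?_ ?_
    · rw [Submodule.span_singleton_le_iff_mem, Submodule.mem_span_singleton]
      refine ⟨MulOpposite.op (1 - e), ?_⟩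
      rw [MulOpposite.smul_eq_mul_unop, MulOpposite.unop_op]
      simp [sub_mul, mul_sub, h2]
    · intro h
      have : 1 - g ∈ T e := by rw [h]; exact Submodule.mem_span_singleton_self _
      obtain ⟨c, hc⟩ := Submodule.mem_span_singleton.1 this
      rw [MulOpposite.smul_eq_mul_unop] at hc
      have h5 : e * ((1 - e) * c.unop) = e * (1 - g) := by rw [hc]
      rw [← mul_assoc, mul_sub, he, mul_sub, h1] at h5
      simp only [mul_one, sub_self, zero_mul] at h5
      exact h4 (sub_eq_zero.1 h5.symm).symm
  have hg' : (e - g) * (e - g) = e - g := by simp [sub_mul, mul_sub, he, hg, h1, h2]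
  obtain ⟨l1, hl1, hl1'⟩ := ih _ (lt g h1 h2 hg h4) g hg rfl
  obtain ⟨l2, hl2, hl2'⟩ := ih _ (lt (e - g) (by rw [mul_sub, he, h1]) (by rw [sub_mul, he, h2]) hg'
    (by simpa using h3)) (e - g) hg' rfl
  refine ⟨l1 ++ l2, by rw [List.sum_append, hl1, hl2]; simp, ?_⟩
  intro x hx
  rcases List.mem_append.1 hx with h | h
  · exact hl1' x h
  · exact hl2' x h

/-- powers of the singular ideal -/
def PP (R : Type*) [Ring R] : ℕ → Submodule Rᵐᵒᵖ R
  | 0 => ⊤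
  | n + 1 => Submodule.span Rᵐᵒᵖ {x | ∃ b ∈ PP R n, ∃ z, ZZ z ∧ x = b * z}

lemma PP_mul {n : ℕ} {b z : R} (hb : b ∈ PP R n) (hz : ZZ z) : b * z ∈ PP R (n + 1) :=
  Submodule.subset_span ⟨b, hb, z, hz, rfl⟩

lemma mulr_mem (I : Submodule Rᵐᵒᵖ R) {x : R} (hx : x ∈ I) (r : R) : x * r ∈ I :=
  I.smul_mem (MulOpposite.op r) hx

lemma PP_left {n : ℕ} : ∀ {b : R}, b ∈ PP R n → ∀ r, r * b ∈ PP R n := by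
  induction n with
  | zero => intro b _ r; exact Submodule.mem_top
  | succ n ih =>
    intro b hb r
    induction hb using Submodule.span_induction with
    | mem x h =>
      obtain ⟨b, hb, z, hz, rfl⟩ := h
      rw [← mul_assoc]
      exact PP_mul (ih hb r) hz
    | zero => rw [mul_zero]; exact zero_mem _
    | add x y _ _ hx hy => rw [mul_add]; exact add_mem hx hy
    | smul a x _ hx =>
      rw [mul_smul_comm]
      exact Submodule.smul_mem _ _ hx

lemma PP_left_mul {n : ℕ} : ∀ {b z : R}, b ∈ PP R n → ZZ z → z * b ∈ PP R (n + 1) := by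
  induction n with
  | zero =>
    intro b z _ hz
    rw [← one_mul (z * b)]
    exact PP_mul Submodule.mem_top (hz.mul_right b)
  | succ n ih =>
    intro b z hb hz
    induction hb using Submodule.span_induction with
    | mem x h =>
      obtain ⟨b, hb, z', hz', rfl⟩ := h
      rw [← mul_assoc]
      exact PP_mul (ih hb hz) hz'
    | zero => rw [mul_zero]; exact zero_mem _
    | add x y _ _ hx hy => rw [mul_add]; exact add_mem hx hy
    | smul a x _ hx =>
      rw [mul_smul_comm]
      exact Submodule.smul_mem _ _ hx

lemma PP_anti (n : ℕ) : PP R (n + 1) ≤ PP R n := by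
  refine Submodule.span_le.2 ?_
  rintro x ⟨b, hb, z, hz, rfl⟩
  exact mulr_mem _ hb z

/-- left annihilators of the powers -/
def LL (R : Type*) [Ring R] (n : ℕ) : Submodule Rᵐᵒᵖ R where
  carrier := {x | ∀ b ∈ PP R n, x * b = 0}
  add_mem' := by intro x y hx hy b hb; rw [add_mul, hx b hb, hy b hb, add_zero]
  zero_mem' := by intro b _; exact zero_mul b
  smul_mem' := by
    intro c x hx b hb
    rw [MulOpposite.smul_eq_mul_unop, mul_assoc]
    exact hx _ (PP_left hb _)

/-- the singular ideal as right ideal -/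
def ZI (R : Type*) [Ring R] : Submodule Rᵐᵒᵖ R where
  carrier := {x | ZZ x}
  add_mem' := fun hx hy => hx.add hy
  zero_mem' := ZZ.zero
  smul_mem' := fun c _ hx => hx.mul_right c.unop

lemma ess_fin {G : Finset R} (hG : ∀ g ∈ G, ZZ g) : ∀ y : R, y ≠ 0 →
    ∃ r, r * y ≠ 0 ∧ ∀ g ∈ G, r * y * g = 0 := by
  classical
  intro y hy
  induction G using Finset.induction_on with
  | empty => exact ⟨1, by simpa using hy, by simp⟩
  | insert a s _ ih =>
    obtain ⟨r, hr, h⟩ := ih (fun g hg => hG g (by simp [hg]))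
    obtain ⟨t, ht, h'⟩ := hG a (by simp) _ hr
    refine ⟨t * r, by rwa [mul_assoc], ?_⟩
    intro g hg
    rcases Finset.mem_insert.1 hg with rfl | hg
    · rw [mul_assoc t]; exact h'
    · rw [mul_assoc, mul_assoc, ← mul_assoc r, h g hg, mul_zero]

lemma nilp [hN : IsNoetherian Rᵐᵒᵖ R] : ∃ n, PP R n = ⊥ := by
  classical
  have hess : ∀ y : R, y ≠ 0 → ∃ r, r * y ≠ 0 ∧ ∀ z, ZZ z → r * y * z = 0 := by
    intro y hy
    obtain ⟨G, hG⟩ := hN.noetherian (ZI R)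
    obtain ⟨r, hr, h⟩ := ess_fin (G := G) (fun g hg => by
      have : g ∈ ZI R := by rw [← hG]; exact Submodule.subset_span hg
      exact this) y hy
    refine ⟨r, hr, fun z hz => ?_⟩
    have hz' : z ∈ Submodule.span Rᵐᵒᵖ (G : Set R) := by rw [hG]; exact hz
    clear hz
    induction hz' using Submodule.span_induction with
    | mem x h' => exact h x h'
    | zero => rw [mul_zero]
    | add x y _ _ hx hy => rw [mul_add, hx, hy, add_zero]
    | smul a x _ hx => rw [mul_smul_comm, hx, smul_zero]
  have hmono : Monotone (LL R) := monotone_nat_of_le_succ fun n x hx b hb => hx b (PP_anti n hb)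
  obtain ⟨n, hn⟩ := monotone_stabilizes_iff_noetherian.2 hN ⟨LL R, hmono⟩
  refine ⟨n, ?_⟩
  by_contra hne
  obtain ⟨B, hB⟩ := hN.noetherian (PP R n)
  have hB0 : ∃ b ∈ B, b ≠ 0 := by
    by_contra! h
    apply hne
    rw [← hB, Submodule.span_eq_bot]
    exact h
  have key : ∀ t : Finset R, t ⊆ B → ∃ x : R, (∃ b ∈ B, x * b ≠ 0) ∧
      ∀ b ∈ t, ∀ z, ZZ z → x * b * z = 0 := by
    intro t
    induction t using Finset.induction_on with
    | empty => intro _; exact ⟨1, by simpa using hB0, by simp⟩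
    | insert a s _ ih =>
      intro hs
      obtain ⟨x, hx, h⟩ := ih (fun y hy => hs (by simp [hy]))
      by_cases hxa : x * a = 0
      · refine ⟨x, hx, ?_⟩
        intro b hb
        rcases Finset.mem_insert.1 hb with rfl | hb
        · intro z _; rw [hxa, zero_mul]
        · exact h b hb
      · obtain ⟨r, hr, h'⟩ := hess _ hxa
        refine ⟨r * x, ⟨a, hs (by simp), by rwa [mul_assoc]⟩, ?_⟩
        intro b hb z hz
        rcases Finset.mem_insert.1 hb with rfl | hb
        · rw [mul_assoc r]; exact h' z hz
        · rw [mul_assoc, mul_assoc, ← mul_assoc x, h b hb z hz, mul_zero]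
  obtain ⟨x, ⟨b, hb, hxb⟩, hx⟩ := key B (Finset.Subset.refl _)
  have hxP : ∀ b ∈ PP R n, ∀ z, ZZ z → x * b * z = 0 := by
    intro b hb
    rw [← hB] at hb
    induction hb using Submodule.span_induction with
    | mem y h' => exact hx y h'
    | zero => intro z _; rw [mul_zero, zero_mul]
    | add y y' _ _ h1 h2 => intro z hz; rw [mul_add, add_mul, h1 z hz, h2 z hz, add_zero]
    | smul a y _ h1 =>
      intro z hz
      rw [MulOpposite.smul_eq_mul_unop, ← mul_assoc, mul_assoc (x * y)]
      exact h1 _ (hz.mul_left _)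
  have hx1 : x ∈ LL R (n + 1) := by
    intro c hc
    induction hc using Submodule.span_induction with
    | mem y h' =>
      obtain ⟨b, hb, z, hz, rfl⟩ := h'
      rw [← mul_assoc]; exact hxP b hb z hz
    | zero => rw [mul_zero]
    | add y y' _ _ h1 h2 => rw [mul_add, h1, h2, add_zero]
    | smul a y _ h1 => rw [mul_smul_comm, h1, smul_zero]
  have hx2 : x ∈ LL R n := by
    have := hn (n + 1) (Nat.le_succ n)
    have h' : LL R n = LL R (n + 1) := this
    rw [h']; exact hx1
  exact hxb (hx2 b (by rw [← hB]; exact Submodule.subset_span hb))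

lemma soc_left (hn : ∃ n, PP R n = ⊥) {y : R} (hy : y ≠ 0) :
    ∃ r, r * y ≠ 0 ∧ ∀ z, ZZ z → z * (r * y) = 0 := by
  classical
  have hex : ∃ n, ∀ b ∈ PP R n, b * y = 0 := by
    obtain ⟨n, hn⟩ := hn
    refine ⟨n, fun b hb => ?_⟩
    rw [hn, Submodule.mem_bot] at hb
    rw [hb, zero_mul]
  have h1 := Nat.find_spec hex
  have h2 : Nat.find hex ≠ 0 := by
    intro h
    rw [h] at h1
    exact hy (by simpa using h1 1 Submodule.mem_top)
  obtain ⟨k, hk⟩ := Nat.exists_eq_succ_of_ne_zero h2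
  have h3 := Nat.find_min hex (m := k) (by omega)
  push Not at h3
  obtain ⟨b, hb, hby⟩ := h3
  refine ⟨b, hby, fun z hz => ?_⟩
  rw [← mul_assoc]
  apply h1
  rw [hk]
  exact PP_left_mul hb hz

lemma soc_right (hn : ∃ n, PP R n = ⊥) {N : Submodule Rᵐᵒᵖ R} (hN : N ≠ ⊤) :
    ∃ x, x ∉ N ∧ ∀ z, ZZ z → x * z ∈ N := by
  classical
  have hex : ∃ n, PP R n ≤ N := by
    obtain ⟨n, hn⟩ := hn
    exact ⟨n, by rw [hn]; exact bot_le⟩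
  have h1 := Nat.find_spec hex
  have h2 : Nat.find hex ≠ 0 := by
    intro h
    rw [h] at h1
    exact hN (top_le_iff.1 h1)
  obtain ⟨k, hk⟩ := Nat.exists_eq_succ_of_ne_zero h2
  have h3 := Nat.find_min hex (m := k) (by omega)
  obtain ⟨b, hb, hby⟩ := SetLike.not_le_iff_exists.1 h3
  refine ⟨b, hby, fun z hz => ?_⟩
  apply h1
  rw [hk]
  exact PP_mul hb hz

lemma eq_zero_of_left (hn : ∃ n, PP R n = ⊥) {b z : R} (hz : ZZ z) (h : z * b = b) : b = 0 := by
  obtain ⟨n, hn⟩ := hn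
  have : ∀ k, b ∈ PP R k := by
    intro k
    induction k with
    | zero => exact Submodule.mem_top
    | succ k ih => rw [← h]; exact PP_left_mul ih hz
  have h2 := this n
  rwa [hn, Submodule.mem_bot] at h2

lemma eq_zero_of_right {b z : R} (hz : ZZ z) (h : b * z = b) : b = 0 := by
  by_contra hb
  obtain ⟨r, hr, h1⟩ := hz b hb
  rw [mul_assoc, h] at h1
  exact hr h1

lemma lemK (hP : PI R) {l : List R} (hl : l.sum = 1) (hU : ∀ e ∈ l, UU e) {p u : R} (hp : UU p)
    (hu : p * u = u) (h0 : u ≠ 0) (hz : ∀ z, ZZ z → z * u = 0) (r : R) :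
    r * u = 0 ↔ ZZ (r * p) := by
  constructor
  · intro h
    by_contra hn
    obtain ⟨s, hs⟩ := F2 hP hl hU hp (by rw [mul_assoc, hp.1]) hn
    apply h0
    rw [← hu, hs]
    simp [mul_assoc, hu, h]
  · intro h
    rw [← hu, ← mul_assoc]
    exact hz _ h

/-- equivalence of idempotents -/
def EE (i j : R) : Prop := ∃ a b : R, i * a = a ∧ a * j = a ∧ j * b = b ∧ b * i = b ∧
  a * b = i ∧ b * a = j

lemma EE.symm {i j : R} (h : EE i j) : EE j i := by
  obtain ⟨a, b, h1, h2, h3, h4, h5, h6⟩ := h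
  exact ⟨b, a, h3, h4, h1, h2, h6, h5⟩

lemma EE.trans {i j k : R} (h : EE i j) (h' : EE j k) : EE i k := by
  obtain ⟨a, b, h1, h2, h3, h4, h5, h6⟩ := h
  obtain ⟨a', b', h1', h2', h3', h4', h5', h6'⟩ := h'
  refine ⟨a * a', b' * b, by rw [← mul_assoc, h1], by rw [mul_assoc, h2'], by rw [← mul_assoc, h3'],
    by rw [mul_assoc, h4], ?_, ?_⟩
  · rw [mul_assoc, ← mul_assoc a', h5', h3, h5]
  · rw [mul_assoc, ← mul_assoc b, h6, h1', h6']

lemma EE.refl {i : R} (h : i * i = i) : EE i i := ⟨i, i, h, h, h, h, h, h⟩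

lemma EE_of (hP : PI R) {l : List R} (hl : l.sum = 1) (hU : ∀ e ∈ l, UU e) {i j p q u v : R}
    (hi : UU i) (hj : UU j) (hp : UU p) (hpq : EE p q)
    (hu : p * u = u) (hui : u * i = u) (hu0 : u ≠ 0) (huz : ∀ z, ZZ z → z * u = 0)
    (hv : q * v = v) (hvj : v * j = v) (hv0 : v ≠ 0) (hvz : ∀ z, ZZ z → z * v = 0) : EE i j := by
  obtain ⟨a, b, h1, h2, h3, h4, h5, h6⟩ := hpq
  have hw0 : a * v ≠ 0 := by
    intro h
    apply hv0
    rw [← hv, ← h6, mul_assoc, h, mul_zero]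
  have hwz : ∀ z, ZZ z → z * (a * v) = 0 := fun z hz => by
    rw [← mul_assoc]; exact hvz _ (hz.mul_right a)
  have hpw : p * (a * v) = a * v := by rw [← mul_assoc, h1]
  have hann : ∀ r, r * u = 0 ↔ r * (a * v) = 0 := fun r => by
    rw [lemK hP hl hU hp hu hu0 huz, lemK hP hl hU hp hpw hw0 hwz]
  obtain ⟨c, hc⟩ := hP u (a * v) (fun r => (hann r).1)
  obtain ⟨d, hd⟩ := hP (a * v) u (fun r => (hann r).2)
  -- normalise
  have hc' : a * v = u * (i * c * j) := by
    rw [← mul_assoc, ← mul_assoc, hui, ← hc, mul_assoc, hvj]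
  have hd' : u = (a * v) * (j * d * i) := by
    have : (a * v) * (j * d * i) = a * (v * j) * d * i := by simp [mul_assoc]
    rw [this, hvj, ← hd, hui]
  set c' := i * c * j with hcd
  set d' := j * d * i with hdd
  have hic : i * c' = c' := by simp only [hcd, ← mul_assoc, hi.1]
  have hcj : c' * j = c' := by rw [hcd, mul_assoc, hj.1]
  have hdi : d' * i = d' := by rw [hdd, mul_assoc, hi.1]
  have huw : u * (c' * d') = u := by rw [← mul_assoc, ← hc', ← hd']
  have hw : ¬ ZZ (c' * d') := fun hz => hu0 (eq_zero_of_right hz huw)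
  obtain ⟨r, hr⟩ := F1 hP hi (by rw [← mul_assoc, hic]) hw
  have hab : c' * (j * (d' * r) * i) = i := by
    have : c' * (j * (d' * r) * i) = (c' * j) * d' * r * i := by simp [mul_assoc]
    rw [this, hcj, ← hr, hi.1]
  refine ⟨c', j * (d' * r) * i, hic, hcj, ?_, ?_, hab, ?_⟩
  · simp only [← mul_assoc, hj.1]
  · rw [mul_assoc, hi.1]
  · apply prim hj
    · simp only [← mul_assoc, hj.1]
    · rw [mul_assoc, hcj]
    · have : j * (d' * r) * i * c' * (j * (d' * r) * i * c') =
        j * (d' * r) * i * (c' * (j * (d' * r) * i)) * c' := by simp only [mul_assoc]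
      rw [this, hab, mul_assoc (j * (d' * r)), hi.1]
    · intro h
      apply hi.2.1
      have : c' * (j * (d' * r) * i) * (c' * (j * (d' * r) * i)) =
        c' * (j * (d' * r) * i * c') * (j * (d' * r) * i) := by simp only [mul_assoc]
      rw [h, hab, hi.1] at this
      simpa using this

lemma kasch (hP : PI R) (hn : ∃ n, PP R n = ⊥) {l : List R} (hl : l.sum = 1)
    (hU : ∀ e ∈ l, UU e) : ∀ e ∈ l, ∃ u, e * u = u ∧ u ≠ 0 ∧ ∀ z, ZZ z → z * u = 0 := by
  classical
  let X := {x // x ∈ l}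
  have hX : Finite X := Finite.of_fintype _ 
  have h : ∀ i : X, ∃ p : X, ∃ u : R, p.1 * u = u ∧ u * i.1 = u ∧ u ≠ 0 ∧
      ∀ z, ZZ z → z * u = 0 := by
    intro i
    have hi := hU _ i.2
    obtain ⟨r, hr, hz⟩ := soc_left hn hi.2.1
    obtain ⟨p, hp, hpr⟩ := exists_left0 hl hr
    refine ⟨⟨p, hp⟩, p * (r * i.1), ?_, ?_, hpr, ?_⟩
    · rw [← mul_assoc, (hU p hp).1]
    · rw [mul_assoc, mul_assoc, hi.1]
    · intro z hz'
      rw [← mul_assoc]; exact hz _ (hz'.mul_right p)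
  choose σ u h1 h2 h3 h4 using h
  let S : Setoid X := ⟨fun i j => EE i.1 j.1, ⟨fun i => EE.refl (hU _ i.2).1, EE.symm, EE.trans⟩⟩
  -- a section of the quotient map
  let F : Quotient S → Quotient S := fun q => Quotient.mk S (σ q.out)
  have hF : Function.Injective F := by
    intro q q' hqq
    have : EE (σ q.out).1 (σ q'.out).1 := Quotient.exact hqq
    have h5 := EE_of hP hl hU (hU _ q.out.2) (hU _ q'.out.2) (hU _ (σ q.out).2) this
      (h1 _) (h2 _) (h3 _) (h4 _) (h1 _) (h2 _) (h3 _) (h4 _)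
    have h6 : Quotient.mk S q.out = Quotient.mk S q'.out := Quotient.sound h5
    simpa using h6
  have hFs := Finite.surjective_of_injective hF
  intro e he
  obtain ⟨q, hq⟩ := hFs (Quotient.mk S ⟨e, he⟩)
  have : EE (σ q.out).1 e := Quotient.exact hq
  obtain ⟨a, b, k1, k2, k3, k4, k5, k6⟩ := this
  refine ⟨b * u q.out, by rw [← mul_assoc, k3], ?_, ?_⟩
  · intro h
    apply h3 q.out
    rw [← h1, ← k5, mul_assoc, h, mul_zero]
  · intro z hz
    rw [← mul_assoc]; exact h4 _ _ (hz.mul_right b)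

/-- `bR` simple implies `Rb` simple -/
lemma simp_left (hP : PI R) (hn : ∃ n, PP R n = ⊥) {l : List R} (hl : l.sum = 1)
    (hU : ∀ e ∈ l, UU e) {b : R} (hb0 : b ≠ 0) (hb : ∀ r, b * r ≠ 0 → ∃ t, b = b * r * t)
    (s : R) (hs : s * b ≠ 0) : ∃ t, b = t * (s * b) := by
  let I : Ideal R :=
    { carrier := {x | ∃ y z, y * b = 0 ∧ ZZ z ∧ x = y + z}
      add_mem' := by
        rintro _ _ ⟨y, z, h1, h2, rfl⟩ ⟨y', z', h1', h2', rfl⟩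
        exact ⟨y + y', z + z', by rw [add_mul, h1, h1', add_zero], h2.add h2', by abel⟩
      zero_mem' := ⟨0, 0, by simp, ZZ.zero, by simp⟩
      smul_mem' := by
        rintro c _ ⟨y, z, h1, h2, rfl⟩
        exact ⟨c * y, c * z, by rw [mul_assoc, h1, mul_zero], h2.mul_left c, by
          rw [smul_eq_mul, mul_add]⟩ }
  have hI : I ≠ ⊤ := by
    intro h
    have : (1 : R) ∈ I := by rw [h]; trivial
    obtain ⟨y, z, h1, h2, h3⟩ := this
    apply hb0
    apply eq_zero_of_left hn h2
    have h4 : (y + z) * b = b := by rw [← h3, one_mul]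
    rwa [add_mul, h1, zero_add] at h4
  obtain ⟨M, hM, hIM⟩ := Ideal.exists_le_maximal I hI
  have hZM : ∀ z, ZZ z → z ∈ M := fun z hz => hIM ⟨0, z, by simp, hz, by simp⟩
  have hlM : ∀ y, y * b = 0 → y ∈ M := fun y hy => hIM ⟨y, 0, hy, ZZ.zero, by simp⟩
  have h1M : (1 : R) ∉ M := fun h => hM.ne_top ((Ideal.eq_top_iff_one M).2 h)
  have hmax : ∀ x, x ∉ M → ∃ s, 1 - s * x ∈ M := by
    intro x hx
    obtain ⟨s, m, hm, h⟩ := hM.exists_inv hx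
    exact ⟨s, by rw [← h]; simpa using hm⟩
  obtain ⟨e, he, heM⟩ : ∃ e ∈ l, e ∉ M := by
    by_contra! h
    exact h1M (by rw [← hl]; exact list_sum_mem h)
  have hee := hU e he
  obtain ⟨u, hu1, hu2, hu3⟩ := kasch hP hn hl hU e he
  obtain ⟨t, ht⟩ := hmax e heM
  have hMv : ∀ m ∈ M, m * (t * u) = 0 := by
    intro m hm
    have h1 : m * t * e ∈ M := by
      have h2 : m * (1 - t * e) ∈ M := M.mul_mem_left m ht
      have h3 : m * t * e = m - m * (1 - t * e) := by rw [mul_sub, mul_assoc]; simp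
      rw [h3]; exact sub_mem hm h2
    rw [← mul_assoc, lemK hP hl hU hee hu1 hu2 hu3]
    by_contra hz
    obtain ⟨w, hw⟩ := F2 hP hl hU hee (by rw [mul_assoc, hee.1]) hz
    exact heM (by rw [hw]; exact M.mul_mem_left w h1)
  have hv0 : t * u ≠ 0 := by
    intro h
    rw [lemK hP hl hU hee hu1 hu2 hu3] at h
    apply h1M
    have := add_mem ht (hZM _ h)
    simpa using this
  obtain ⟨c, hc⟩ := hP b (t * u) (fun y hy => hMv y (hlM y hy))
  obtain ⟨d, hd⟩ := hb c (by rwa [← hc])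
  have hMb : ∀ m ∈ M, m * b = 0 := by
    intro m hm
    rw [hd, ← hc, ← mul_assoc, hMv m hm, zero_mul]
  have hsM : s ∉ M := fun h => hs (hMb s h)
  obtain ⟨w, hw⟩ := hmax s hsM
  refine ⟨w, ?_⟩
  have := hMb _ hw
  rw [sub_mul, one_mul, sub_eq_zero, mul_assoc] at this
  exact this

lemma RM (hP : PI R) (hn : ∃ n, PP R n = ⊥) {l : List R} (hl : l.sum = 1)
    (hU : ∀ e ∈ l, UU e) {a b e : R} (he : e ∈ l) (hae : a * e = a) (hbe : b * e = b)
    (ha0 : a ≠ 0) (ha : ∀ r, a * r ≠ 0 → ∃ t, a = a * r * t)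
    (hab : ∀ r, a * r = 0 → b * r = 0) : ∃ c, b = c * a := by
  by_cases hb0 : b = 0
  · exact ⟨0, by simp [hb0]⟩
  have hb : ∀ r, b * r ≠ 0 → ∃ t, b = b * r * t := by
    intro r hr
    obtain ⟨t, ht⟩ := ha r (fun h => hr (hab r h))
    refine ⟨t, ?_⟩
    have := hab (1 - r * t) (by rw [mul_sub, mul_one, ← mul_assoc, ← ht, sub_self])
    rw [mul_sub, mul_one, sub_eq_zero, ← mul_assoc] at this
    exact this
  obtain ⟨r, s, h1, h2⟩ := (hU e he).2.2 a b (by rwa [hae]) (by rwa [hbe])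
  rw [hae, hbe] at h1
  rw [hae] at h2
  obtain ⟨t, ht⟩ := simp_left hP hn hl hU hb0 hb s (by rwa [← h1])
  exact ⟨t * r, by rw [mul_assoc, h1, ← ht]⟩

lemma exists_right_mem {l : List R} (hl : l.sum = 1) {N : Submodule Rᵐᵒᵖ R} {x : R} (hx : x ∉ N) :
    ∃ e ∈ l, x * e ∉ N := by
  by_contra! h
  apply hx
  rw [← mul_one x, ← hl, ← List.map_id l, ← List.sum_map_mul_left]
  apply list_sum_mem
  simpa using h

lemma right_fl [hN : IsNoetherian Rᵐᵒᵖ R] (hP : PI R) (hn : ∃ n, PP R n = ⊥) {l : List R}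
    (hl : l.sum = 1) (hU : ∀ e ∈ l, UU e) : IsFiniteLength Rᵐᵒᵖ R := by
  obtain ⟨N, hNf, hmax⟩ := WellFounded.has_min (wellFounded_gt (α := Submodule Rᵐᵒᵖ R))
    {N | IsFiniteLength Rᵐᵒᵖ N} ⟨⊥, IsFiniteLength.of_subsingleton⟩
  by_cases hT : N = ⊤
  · rw [hT] at hNf
    exact Submodule.topEquiv.isFiniteLength hNf
  exfalso
  obtain ⟨x, hx, hxz⟩ := soc_right hn hT
  obtain ⟨e, he, hxe⟩ := exists_right_mem hl hx
  have hee := hU e he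
  set N' := N ⊔ Submodule.span Rᵐᵒᵖ {x * e} with hN'
  have hxe' : x * e ∈ N' := (le_sup_right : _ ≤ N') (Submodule.mem_span_singleton_self _)
  have cov : N ⋖ N' := by
    refine ⟨lt_of_le_of_ne le_sup_left (fun h => hxe (h ▸ hxe')), ?_⟩
    intro K hK hK'
    obtain ⟨k, hk, hkN⟩ := SetLike.exists_of_lt hK
    obtain ⟨y, hy, w, hw, rfl⟩ := Submodule.mem_sup.1 (hK'.le hk)
    obtain ⟨c, rfl⟩ := Submodule.mem_span_singleton.1 hw
    rw [MulOpposite.smul_eq_mul_unop] at hk hkN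
    have h1 : x * e * c.unop ∈ K := by
      have := sub_mem hk (hK.le hy)
      simpa using this
    have h2 : ¬ ZZ (e * c.unop) := by
      intro hz
      apply hkN
      refine add_mem hy ?_
      rw [mul_assoc]
      exact hxz _ hz
    obtain ⟨t, ht⟩ := F1 hP hee (by rw [← mul_assoc, hee.1]) h2
    have h3 : x * e ∈ K := by
      rw [ht, ← mul_assoc, ← mul_assoc]
      exact mulr_mem _ h1 t
    apply hK'.not_ge
    exact sup_le hK.le ((Submodule.span_singleton_le_iff_mem _ _).2 h3)
  have := (covBy_iff_quot_is_simple cov.le).mp cov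
  have e1 := (N.comap N'.subtype).equivMapOfInjective _ (Submodule.injective_subtype _)
  rw [Submodule.map_comap_subtype, inf_of_le_right cov.le] at e1
  exact hmax N' (IsFiniteLength.of_simple_quotient (e1.symm.isFiniteLength hNf)) cov.lt

end helpers

section lengths
universe u v w
variable {A : Type u} {B : Type v} [Ring A] [Ring B] {Q : Type w} [AddCommGroup Q] [Module A Q]
  [Module B Q] [SMulCommClass A B Q]

/-- restriction -/
def resM {M : Type*} [AddCommGroup M] [Module A M] (N : Submodule A M) :
    (M →ₗ[A] Q) →ₗ[B] (N →ₗ[A] Q) where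
  toFun f := f ∘ₗ N.subtype
  map_add' _ _ := rfl
  map_smul' _ _ := rfl

/-- inflation -/
def infM {M : Type*} [AddCommGroup M] [Module A M] (N : Submodule A M) :
    ((M ⧸ N) →ₗ[A] Q) →ₗ[B] (M →ₗ[A] Q) where
  toFun f := f ∘ₗ N.mkQ
  map_add' _ _ := rfl
  map_smul' _ _ := rfl

lemma len_split {M : Type*} [AddCommGroup M] [Module A M] (N : Submodule A M) :
    Module.length B (M →ₗ[A] Q) = Module.length B ((M ⧸ N) →ₗ[A] Q) +
      Module.length B (LinearMap.range (resM (B := B) (Q := Q) N)) := by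
  refine Module.length_eq_add_of_exact (infM N) (resM N).rangeRestrict ?_
    (LinearMap.surjective_rangeRestrict _) ?_
  · intro f g h
    apply LinearMap.ext
    intro x
    obtain ⟨x, rfl⟩ := N.mkQ_surjective x
    exact LinearMap.congr_fun h x
  · intro f
    constructor
    · intro h
      have h' : f ∘ₗ N.subtype = 0 := congrArg Subtype.val h
      refine ⟨N.liftQ f (fun x hx => LinearMap.congr_fun h' ⟨x, hx⟩), ?_⟩
      apply LinearMap.ext
      intro x
      rfl
    · rintro ⟨g, rfl⟩
      apply Subtype.ext
      apply LinearMap.ext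
      intro x
      have : N.mkQ x = 0 := by simp
      change g (N.mkQ x) = 0
      rw [this, map_zero]

lemma hom_len (h : ∀ (N : Type w) [AddCommGroup N] [Module A N], IsSimpleModule A N →
    Module.length B (N →ₗ[A] Q) ≤ 1) (M : Type w) [AddCommGroup M] [Module A M]
    (hM : IsFiniteLength A M) : Module.length B (M →ₗ[A] Q) ≤ Module.length A M := by
  induction hM with
  | of_subsingleton =>
    rw [Module.length_eq_zero]
    exact zero_le
  | @of_simple_quotient M _ _ N hs _ ih =>
    rw [len_split N, Module.length_eq_add_of_exact N.subtype N.mkQ N.injective_subtype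
      N.mkQ_surjective (LinearMap.exact_subtype_mkQ N), Module.length_eq_one A (M ⧸ N), add_comm]
    exact add_le_add ((Module.length_le_of_injective _ (Submodule.injective_subtype _)).trans ih)
      (h _ hs)

lemma len_le_one {H : Type*} [AddCommGroup H] [Module B H]
    (h : ∀ f g : H, f ≠ 0 → ∃ c : B, g = c • f) : Module.length B H ≤ 1 := by
  rcases subsingleton_or_nontrivial H with hs | hs
  · rw [Module.length_eq_zero]; exact zero_le
  · have : IsSimpleModule B H := by
      rw [isSimpleModule_iff_toSpanSingleton_surjective]
      refine ⟨hs, fun f hf g => ?_⟩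
      obtain ⟨c, hc⟩ := h f g hf
      exact ⟨c, hc.symm⟩
    rw [Module.length_eq_one]

end lengths

lemma simple_gen {A N : Type*} [Ring A] [AddCommGroup N] [Module A N] (h : IsSimpleModule A N)
    {x : N} (hx : x ≠ 0) (y : N) : ∃ c : A, y = c • x := by
  obtain ⟨c, hc⟩ := (isSimpleModule_iff_toSpanSingleton_surjective.1 h).2 x hx y
  exact ⟨c, hc.symm⟩

lemma left_one {R : Type*} [Ring R] (hP : PI R) (N : Type*) [AddCommGroup N] [Module R N]
    (h : IsSimpleModule R N) : Module.length Rᵐᵒᵖ (N →ₗ[R] R) ≤ 1 := by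
  apply len_le_one
  intro f g hf
  obtain ⟨x, hx⟩ : ∃ x, f x ≠ 0 := by
    by_contra! h0
    exact hf (LinearMap.ext h0)
  have hx0 : x ≠ 0 := by rintro rfl; simp at hx
  obtain ⟨s, hs⟩ := hP (f x) (g x) (by
    intro u hu
    have h1 : u • x = 0 := by
      by_contra hne
      obtain ⟨c, hc⟩ := simple_gen h hne x
      apply hx
      rw [hc, map_smul, map_smul, smul_eq_mul u, hu, smul_zero]
    rw [← smul_eq_mul, ← map_smul, h1, map_zero])
  refine ⟨MulOpposite.op s, LinearMap.ext fun y => ?_⟩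
  obtain ⟨c, rfl⟩ := simple_gen h hx0 y
  rw [LinearMap.smul_apply, map_smul, map_smul, hs, MulOpposite.smul_eq_mul_unop]
  simp [mul_assoc]

lemma right_one {R : Type*} [Ring R] (hP : PI R) (hn : ∃ n, PP R n = ⊥) {l : List R}
    (hl : l.sum = 1) (hU : ∀ e ∈ l, UU e) (N : Type*) [AddCommGroup N] [Module Rᵐᵒᵖ N]
    (h : IsSimpleModule Rᵐᵒᵖ N) : Module.length R (N →ₗ[Rᵐᵒᵖ] R) ≤ 1 := by
  apply len_le_one
  intro f g hf
  obtain ⟨x, hx⟩ : ∃ x, f x ≠ 0 := by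
    by_contra! h0
    exact hf (LinearMap.ext h0)
  obtain ⟨e, he, hxe⟩ := exists_right_mem hl (N := ⊥) (x := f x) (by simpa using hx)
  rw [Submodule.mem_bot] at hxe
  have hee := hU e he
  have hmap : ∀ (φ : N →ₗ[Rᵐᵒᵖ] R) (r : R) (y : N), φ (MulOpposite.op r • y) = φ y * r := by
    intro φ r y
    rw [map_smul, MulOpposite.smul_eq_mul_unop, MulOpposite.unop_op]
  set y := MulOpposite.op e • x with hy
  have hy1 : ∀ φ : N →ₗ[Rᵐᵒᵖ] R, φ y * e = φ y := fun φ => by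
    rw [hy, hmap, mul_assoc, hee.1]
  have ha0 : f y ≠ 0 := by rwa [hy, hmap]
  have hy0 : y ≠ 0 := by intro h0; rw [h0] at ha0; simp at ha0
  obtain ⟨c, hc⟩ := RM hP hn hl hU he (hy1 f) (hy1 g) ha0 (by
    intro r hr
    have h1 : MulOpposite.op r • y ≠ 0 := by
      intro h0
      apply hr
      rw [← hmap, h0, map_zero]
    obtain ⟨t, ht⟩ := simple_gen h h1 y
    refine ⟨t.unop, ?_⟩
    rw [← hmap, ← hmap, MulOpposite.op_unop, ← ht]) (by
    intro r hr
    have h1 : MulOpposite.op r • y = 0 := by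
      by_contra hne
      obtain ⟨t, ht⟩ := simple_gen h hne y
      apply ha0
      rw [ht, map_smul, hmap, hr, smul_zero]
    rw [← hmap, h1, map_zero])
  clear_value y
  refine ⟨c, LinearMap.ext fun w => ?_⟩
  obtain ⟨r, rfl⟩ := simple_gen h hy0 w
  rw [LinearMap.smul_apply, map_smul, map_smul, hc, smul_eq_mul, MulOpposite.smul_eq_mul_unop,
    MulOpposite.smul_eq_mul_unop, mul_assoc]

lemma final {R : Type*} [Ring R] [hN : IsNoetherian Rᵐᵒᵖ R] (hP : PI R) {l : List R}
    (hl : l.sum = 1) (hU : ∀ e ∈ l, UU e) : IsNoetherianRing R ∧ Module.Injective R R := by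
  have hn : ∃ n, PP R n = ⊥ := nilp
  have hfl := right_fl hP hn hl hU
  have h1 : Module.length R R ≤ Module.length Rᵐᵒᵖ R := by
    refine le_trans ?_ (hom_len (A := Rᵐᵒᵖ) (B := R) (Q := R)
      (fun N _ _ h => right_one hP hn hl hU N h) R hfl)
    refine Module.length_le_of_injective
      (LinearMap.toSpanSingleton R (R →ₗ[Rᵐᵒᵖ] R) LinearMap.id) ?_
    intro a b hab
    have := LinearMap.congr_fun hab 1
    simpa using this
  have hlt : Module.length Rᵐᵒᵖ R ≠ ⊤ := Module.length_ne_top_iff.2 hfl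
  have hlt' : Module.length R R ≠ ⊤ := ne_top_of_le_ne_top hlt h1
  have hfl' : IsFiniteLength R R := Module.length_ne_top_iff.1 hlt'
  obtain ⟨i1, i2⟩ := isFiniteLength_iff_isNoetherian_isArtinian.1 hfl'
  refine ⟨i1, Module.Baer.injective ?_⟩
  intro I g
  have hlen : ∀ (M : Type _) [AddCommGroup M] [Module R M], IsFiniteLength R M →
      Module.length Rᵐᵒᵖ (M →ₗ[R] R) ≤ Module.length R M :=
    fun M _ _ hM => hom_len (A := R) (B := Rᵐᵒᵖ) (Q := R) (fun N _ _ h => left_one hP N h) M hM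
  have hI : IsFiniteLength R I := isFiniteLength_iff_isNoetherian_isArtinian.2
    ⟨inferInstance, inferInstance⟩
  have hRI : IsFiniteLength R (R ⧸ I) := isFiniteLength_iff_isNoetherian_isArtinian.2
    ⟨inferInstance, inferInstance⟩
  have h2 := len_split (A := R) (B := Rᵐᵒᵖ) (Q := R) I
  have h3 : Module.length Rᵐᵒᵖ R ≤ Module.length Rᵐᵒᵖ (R →ₗ[R] R) :=
    (LinearMap.ringLmapEquivSelf R Rᵐᵒᵖ R).symm.length_eq.le
  have h4 := Module.length_eq_add_of_exact I.subtype I.mkQ I.injective_subtype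
      I.mkQ_surjective (LinearMap.exact_subtype_mkQ I)
  have h5 := hlen _ hI
  have h6 := hlen _ hRI
  have hIt : Module.length R I ≠ ⊤ := Module.length_ne_top_iff.2 hI
  have hRIt : Module.length R (R ⧸ I) ≠ ⊤ := Module.length_ne_top_iff.2 hRI
  have hHt : Module.length Rᵐᵒᵖ (I →ₗ[R] R) ≠ ⊤ := ne_top_of_le_ne_top hIt h5
  have hrange : LinearMap.range (resM (A := R) (B := Rᵐᵒᵖ) (Q := R) I) = ⊤ := by
    obtain ⟨j1, j2⟩ := isFiniteLength_iff_isNoetherian_isArtinian.1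
      (Module.length_ne_top_iff.1 hHt)
    by_contra hne
    have h7 := Submodule.length_lt hne
    have h8 : Module.length R I + Module.length R (R ⧸ I) ≤
        Module.length R (R ⧸ I) + Module.length Rᵐᵒᵖ
          (LinearMap.range (resM (A := R) (B := Rᵐᵒᵖ) (Q := R) I)) := by
      rw [← h4]
      refine (h1.trans h3).trans ?_
      rw [h2]
      gcongr
    rw [add_comm] at h8
    have h9 := (ENat.add_le_add_iff_left hRIt).1 h8
    exact absurd (h5.trans h9) (not_le.2 h7)
  obtain ⟨g', hg'⟩ : g ∈ LinearMap.range (resM (A := R) (B := Rᵐᵒᵖ) (Q := R) I) := by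
    rw [hrange]; trivial
  refine ⟨g', fun x mem => ?_⟩
  exact LinearMap.congr_fun hg' ⟨x, mem⟩

/-- Right noetherian, left CS, left P-injective imply QF. -/
theorem stmt10 (R : Type*) [Ring R] [IsNoetherianRing Rᵐᵒᵖ] (hCS : IsLeftCS R)
    (hP : IsLeftPInjective R) : IsQuasiFrobenius R := by
  have hP' : PI R := fun a x h => (hP a x).1 h
  have hCS' : ∀ I : Ideal R, ∃ f : R, f * f = f ∧ (∀ x ∈ I, x * f = x) ∧ ∀ y, y * f ≠ 0 →
      ∃ r, r * (y * f) ≠ 0 ∧ r * (y * f) ∈ I := by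
    intro I
    obtain ⟨K, ⟨K', hK⟩, hIK, hess⟩ := hCS I
    obtain ⟨f, hf, f', hf', hff⟩ := Submodule.mem_sup.1
      (show (1 : R) ∈ K ⊔ K' by rw [hK.sup_eq_top]; trivial)
    have hkf : ∀ k ∈ K, k * f = k := by
      intro k hk
      have h1 : k - k * f = k * f' := by
        rw [sub_eq_iff_eq_add, add_comm, ← mul_add, hff, mul_one]
      have h2 : k - k * f ∈ K ⊓ K' :=
        ⟨sub_mem hk (K.mul_mem_left k hf), by rw [h1]; exact K'.mul_mem_left k hf'⟩
      rw [hK.inf_eq_bot, Submodule.mem_bot, sub_eq_zero] at h2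
      exact h2.symm
    refine ⟨f, hkf f hf, fun x hx => hkf x (hIK hx), ?_⟩
    intro y hy
    by_contra! h
    apply hy
    have h1 := hess (Ideal.span {y * f})
      ((Ideal.span_singleton_le_iff_mem _).2 (K.mul_mem_left y hf)) (by
        rw [eq_bot_iff]
        rintro x ⟨hx, hxI⟩
        obtain ⟨r, rfl⟩ := Ideal.mem_span_singleton'.1 hx
        by_contra hne
        exact h r hne hxI)
    rwa [Ideal.span_singleton_eq_bot] at h1
  obtain ⟨l, hl, hU⟩ := decomp hP' hCS'
  have hN : IsNoetherian Rᵐᵒᵖ R :=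
    isNoetherian_of_linearEquiv (MulOpposite.opLinearEquiv Rᵐᵒᵖ : R ≃ₗ[Rᵐᵒᵖ] Rᵐᵒᵖ).symm
  exact final hP' hl hU
end

section
/- If R is a left and right mininjective ring with ACC on right annihilators in which the right socle S_r is essential as a right ideal, then R is quasi-Frobenius. -/
section Helpers
open MulOpposite Module
open scoped Pointwise

theorem q_len_ker {A M N : Type*} [Ring A] [AddCommGroup M] [Module A M] [AddCommGroup N]
    [Module A N] (f : M →ₗ[A] N) :
    Module.length A M = Module.length A (LinearMap.ker f) + Module.length A (LinearMap.range f) :=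
  Module.length_eq_add_of_exact (LinearMap.ker f).subtype f.rangeRestrict
    (Submodule.subtype_injective _) f.surjective_rangeRestrict
    (by
      have := LinearMap.exact_subtype_ker_map f.rangeRestrict
      rwa [LinearMap.ker_rangeRestrict] at this)

theorem q_len_le {A M N : Type*} [Ring A] [AddCommGroup M] [Module A M] [AddCommGroup N]
    [Module A N] (f : M →ₗ[A] N) :
    Module.length A M ≤ Module.length A (LinearMap.ker f) + Module.length A N := by
  rw [q_len_ker f]
  gcongr
  exact Module.length_le_of_injective _ (Submodule.subtype_injective _)

/-- Restriction. -/
def q_precomp {A B P M N : Type*} [Ring A] [Ring B] [AddCommGroup P] [Module A P] [Module B P]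
    [SMulCommClass A B P] [AddCommGroup M] [Module A M] [AddCommGroup N] [Module A N]
    (i : N →ₗ[A] M) : (M →ₗ[A] P) →ₗ[B] (N →ₗ[A] P) where
  toFun f := f ∘ₗ i
  map_add' _ _ := rfl
  map_smul' _ _ := rfl

/-- Factor a kernel through the quotient. -/
def q_fac {A B P M : Type*} [Ring A] [Ring B] [AddCommGroup P] [Module A P] [Module B P]
    [SMulCommClass A B P] [AddCommGroup M] [Module A M] (N : Submodule A M) :
    LinearMap.ker (q_precomp (B := B) (P := P) N.subtype) →ₗ[B] ((M ⧸ N) →ₗ[A] P) where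
  toFun f := N.liftQ f.1 (fun x hx => by
    have := LinearMap.congr_fun (LinearMap.mem_ker.1 f.2) ⟨x, hx⟩
    exact this)
  map_add' _ _ := by ext; rfl
  map_smul' _ _ := by ext; rfl

theorem q_fac_inj {A B P M : Type*} [Ring A] [Ring B] [AddCommGroup P] [Module A P] [Module B P]
    [SMulCommClass A B P] [AddCommGroup M] [Module A M] (N : Submodule A M) :
    Function.Injective (q_fac (A := A) (B := B) (P := P) N) := by
  intro f g h
  ext x
  exact LinearMap.congr_fun h (N.mkQ x)

theorem q_hom_len.{u} {A B P : Type*} [Ring A] [Ring B] [AddCommGroup P] [Module A P] [Module B P]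
    [SMulCommClass A B P]
    (hs : ∀ (M : Type u) [AddCommGroup M] [Module A M], IsSimpleModule A M →
      Module.length B (M →ₗ[A] P) ≤ 1) (M : Type u) [AddCommGroup M] [Module A M] :
    Module.length B (M →ₗ[A] P) ≤ Module.length A M := by
  by_cases h : Module.length A M = ⊤
  · rw [h]; exact le_top
  · rw [← Ne, Module.length_ne_top_iff] at h
    induction h with
    | of_subsingleton => simp
    | @of_simple_quotient M _ _ N hN _ ih =>
      have h1 := q_len_le (q_precomp (B := B) (P := P) N.subtype)
      have h2 := Module.length_le_of_injective _ (q_fac_inj (A := A) (B := B) (P := P) N)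
      have h3 := hs (M ⧸ N) hN
      have h4 : Module.length A M = Module.length A N + Module.length A (M ⧸ N) :=
        Module.length_eq_add_of_exact N.subtype N.mkQ (Submodule.subtype_injective _)
          (Submodule.mkQ_surjective _) (LinearMap.exact_subtype_mkQ N)
      have h5 : Module.length A (M ⧸ N) = 1 := Module.length_eq_one_iff.2 hN
      rw [h4, h5, add_comm]
      exact h1.trans (add_le_add (h2.trans h3) ih)

theorem q_cyc {B X : Type*} [Ring B] [AddCommGroup X] [Module B X]
    (h : ∀ f g : X, f ≠ 0 → ∃ c : B, g = c • f) : Module.length B X ≤ 1 := by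
  rcases subsingleton_or_nontrivial X with hX | hX
  · simp
  · refine (Module.length_eq_one_iff.2 ?_).le
    rw [isSimpleModule_iff_toSpanSingleton_surjective]
    refine ⟨hX, fun x hx y => ?_⟩
    obtain ⟨c, hc⟩ := h x y hx
    exact ⟨c, by simp [hc]⟩

theorem q_left {R : Type*} [Ring R] (h : IsLeftMininjective R) (M : Type*) [AddCommGroup M]
    [Module R M] (hM : IsSimpleModule R M) : Module.length Rᵐᵒᵖ (M →ₗ[R] R) ≤ 1 := by
  apply q_cyc
  intro f g hf
  have hi : Function.Injective f := (LinearMap.injective_or_eq_zero f).resolve_right hf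
  let e := LinearEquiv.ofInjective f hi
  obtain ⟨c, hc⟩ := h (LinearMap.range f) (IsSimpleModule.congr e.symm) (g ∘ₗ e.symm.toLinearMap)
  refine ⟨op c, ?_⟩
  ext m
  have := hc (e m)
  simpa [e] using this

theorem q_right {R : Type*} [Ring R] (h : IsRightMininjective R) (M : Type*) [AddCommGroup M]
    [Module Rᵐᵒᵖ M] (hM : IsSimpleModule Rᵐᵒᵖ M) : Module.length R (M →ₗ[Rᵐᵒᵖ] R) ≤ 1 := by
  apply q_cyc
  intro f g hf
  have hi : Function.Injective f := (LinearMap.injective_or_eq_zero f).resolve_right hf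
  let e := LinearEquiv.ofInjective f hi
  obtain ⟨c, hc⟩ := h (LinearMap.range f) (IsSimpleModule.congr e.symm) (g ∘ₗ e.symm.toLinearMap)
  refine ⟨c, ?_⟩
  ext m
  have := hc (e m)
  simpa [e] using this

/-- Right multiplications on a left ideal. -/
def q_rmul {R : Type*} [Ring R] (I : Ideal R) : R →ₗ[Rᵐᵒᵖ] (I →ₗ[R] R) where
  toFun c :=
    { toFun := fun x => (x : R) * c
      map_add' := fun x y => by simp [add_mul]
      map_smul' := fun x y => by simp [mul_assoc] }
  map_add' a b := by ext x; simp [mul_add]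
  map_smul' a b := by ext x; simp [mul_assoc]

/-- Left multiplications on a right ideal. -/
def q_lmul {R : Type*} [Ring R] (I : RIdeal R) : R →ₗ[R] (I →ₗ[Rᵐᵒᵖ] R) where
  toFun c :=
    { toFun := fun x => c * (x : R)
      map_add' := fun x y => by simp [mul_add]
      map_smul' := fun x y => by simp [mul_assoc] }
  map_add' a b := by ext x; simp [add_mul]
  map_smul' a b := by ext x; simp [mul_assoc]

/-- Right multiplications on the quotient. -/
def q_rann {R : Type*} [Ring R] (I : Ideal R) :
    LinearMap.ker (q_rmul I) →ₗ[Rᵐᵒᵖ] ((R ⧸ I) →ₗ[R] R) where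
  toFun c := Submodule.liftQ I (LinearMap.toSpanSingleton R R c.1) (fun x hx => by
    have := LinearMap.congr_fun (LinearMap.mem_ker.1 c.2) ⟨x, hx⟩
    simpa [q_rmul] using this)
  map_add' a b := by
    apply Submodule.linearMap_qext; ext; simp
  map_smul' a b := by
    apply Submodule.linearMap_qext; ext; simp

/-- Left multiplications on the quotient. -/
def q_lann {R : Type*} [Ring R] (I : RIdeal R) :
    LinearMap.ker (q_lmul I) →ₗ[R] ((R ⧸ I) →ₗ[Rᵐᵒᵖ] R) where
  toFun c := Submodule.liftQ I
    { toFun := fun x => c.1 * x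
      map_add' := fun x y => by simp [mul_add]
      map_smul' := fun x y => by simp [mul_assoc] } (fun x hx => by
    have := LinearMap.congr_fun (LinearMap.mem_ker.1 c.2) ⟨x, hx⟩
    simpa [q_lmul] using this)
  map_add' a b := by
    apply Submodule.linearMap_qext; ext; simp [add_mul]
  map_smul' a b := by
    apply Submodule.linearMap_qext; ext; simp [mul_assoc]

theorem q_rann_inj {R : Type*} [Ring R] (I : Ideal R) : Function.Injective (q_rann I) := by
  intro a b h
  have := LinearMap.congr_fun h (I.mkQ 1)
  ext
  simpa [q_rann] using this

theorem q_lann_inj {R : Type*} [Ring R] (I : RIdeal R) : Function.Injective (q_lann I) := by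
  intro a b h
  have := LinearMap.congr_fun h (I.mkQ 1)
  ext
  simpa [q_lann] using this

theorem q_final {R : Type*} [Ring R] (hl : IsLeftMininjective R) (hr : IsRightMininjective R)
    (hfin : Module.length R R ≠ ⊤) : IsQuasiFrobenius R := by
  have hN := (isFiniteLength_iff_isNoetherian_isArtinian.1 (Module.length_ne_top_iff.1 hfin)).1
  refine ⟨hN, Module.Baer.injective ?_⟩
  have hab : Module.length Rᵐᵒᵖ R = Module.length R R := by
    apply le_antisymm
    · refine le_trans (Module.length_le_of_injective (q_rmul (⊤ : Ideal R)) ?_)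
        ((q_hom_len (q_left hl) _).trans_eq Module.length_top)
      intro a b h
      simpa [q_rmul] using LinearMap.congr_fun h ⟨1, trivial⟩
    · refine le_trans (Module.length_le_of_injective (q_lmul (⊤ : RIdeal R)) ?_)
        ((q_hom_len (q_right hr) _).trans_eq Module.length_top)
      intro a b h
      simpa [q_lmul] using LinearMap.congr_fun h ⟨1, trivial⟩
  intro I g
  suffices hs : LinearMap.range (q_rmul I) = ⊤ by
    obtain ⟨c, hc⟩ : g ∈ LinearMap.range (q_rmul I) := hs ▸ trivial
    refine ⟨LinearMap.toSpanSingleton R R c, fun x hx => ?_⟩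
    rw [← hc]; simp [q_rmul]
  have h1 := q_len_ker (q_rmul I)
  have h2 := Module.length_le_of_injective _ (q_rann_inj I)
  have h3 := q_hom_len (q_left hl) (R ⧸ I)
  have h5 := q_hom_len (q_left hl) I
  have h4 : Module.length R R = Module.length R I + Module.length R (R ⧸ I) :=
    Module.length_eq_add_of_exact (Submodule.subtype I) (Submodule.mkQ I)
      (Submodule.subtype_injective _)
      (Submodule.mkQ_surjective _) (LinearMap.exact_subtype_mkQ I)
  have hIf : Module.length R I ≠ ⊤ := fun h => hfin (by rw [h4, h, top_add])
  have hQf : Module.length R (R ⧸ I) ≠ ⊤ := fun h => hfin (by rw [h4, h, add_top])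
  by_contra hne
  have hfl := isFiniteLength_iff_isNoetherian_isArtinian.1
    (Module.length_ne_top_iff.1 (ne_top_of_le_ne_top hIf h5))
  have := hfl.1
  have := hfl.2
  have h6 := (Submodule.length_lt hne).trans_le h5
  have h7 := h2.trans h3
  rw [hab, h4, add_comm] at h1
  have h8 := add_le_add_left h7 (Module.length Rᵐᵒᵖ (LinearMap.range (q_rmul I)))
  have h9 : Module.length R (R ⧸ I) + Module.length Rᵐᵒᵖ (LinearMap.range (q_rmul I)) <
    Module.length R (R ⧸ I) + Module.length R I := (ENat.add_lt_add_iff_left hQf).2 h6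
  exact absurd (h1.le.trans h8) (not_le.2 h9)

theorem q_max {R : Type*} [Ring R] (hacc : ACCOnRightAnnihilators R) {ι : Type*} [Nonempty ι]
    (F : ι → Set R) : ∃ i, ∀ j, rAnn R (F i) ⊆ rAnn R (F j) → rAnn R (F j) = rAnn R (F i) := by
  have hw : WellFoundedGT {s : Set R // ∃ X, s = rAnn R X} := by
    rw [wellFoundedGT_iff_monotone_chain_condition]
    intro a
    obtain ⟨n, hn⟩ := hacc (fun n => (a n).1) (fun n => (a n).2)
      (fun n => a.monotone (Nat.le_succ n))
    exact ⟨n, fun m hm => Subtype.ext (hn m hm).symm⟩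
  obtain ⟨x, ⟨i, rfl⟩, hx⟩ := hw.wf.has_min
    (Set.range fun i => (⟨rAnn R (F i), F i, rfl⟩ : {s : Set R // ∃ X, s = rAnn R X}))
    (Set.range_nonempty _)
  refine ⟨i, fun j hij => ?_⟩
  by_contra hne
  exact hx _ ⟨j, rfl⟩ (lt_of_le_of_ne hij (fun h => hne (Subtype.ext_iff.1 h).symm))

theorem q_fin {R : Type*} [Ring R] (hacc : ACCOnRightAnnihilators R) (X : Set R) :
    ∃ F : Finset R, (F : Set R) ⊆ X ∧ lAnn R F = lAnn R X := by
  classical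
  have : Nonempty {F : Finset R // (F : Set R) ⊆ X} := ⟨⟨∅, by simp⟩⟩
  obtain ⟨⟨F, hF⟩, h⟩ := q_max hacc (fun F : {F : Finset R // (F : Set R) ⊆ X} => lAnn R (F.1 : Set R))
  refine ⟨F, hF, Set.Subset.antisymm (fun a ha x hx => ?_) (fun a ha x hx => ha x (hF hx))⟩
  have h1 := h ⟨insert x F, by
    rw [Finset.coe_insert]; exact Set.insert_subset hx hF⟩ (fun y hy b hb => hy b (fun z hz => hb z (by
      simp only [Finset.coe_insert]; exact Set.mem_insert_of_mem _ hz)))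
  have h2 : x ∈ rAnn R (lAnn R (F : Set R)) := by
    rw [← h1]
    intro b hb
    exact hb x (by simp)
  exact h2 a ha

/-- Union of the minimal right ideals. -/
def q_X (R : Type*) [Ring R] : Set R := {x | ∃ m : RIdeal R, IsSimpleModule Rᵐᵒᵖ m ∧ x ∈ m}

/-- The left annihilator of the right socle. -/
def q_J (R : Type*) [Ring R] : Ideal R := lAnnI R (q_X R)

theorem q_X_mul {R : Type*} [Ring R] (b : R) {x : R} (hx : x ∈ q_X R) :
    b * x ∈ q_X R := by
  obtain ⟨m, hm, hxm⟩ := hx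
  rcases LinearMap.injective_or_eq_zero (q_lmul m b) with h | h
  · exact ⟨LinearMap.range (q_lmul m b),
      IsSimpleModule.congr (LinearEquiv.ofInjective _ h).symm, ⟨⟨x, hxm⟩, rfl⟩⟩
  · have : b * x = 0 := LinearMap.congr_fun h ⟨x, hxm⟩
    rw [this]
    exact ⟨m, hm, m.zero_mem⟩

instance q_J_two (R : Type*) [Ring R] : (q_J R).IsTwoSided where
  mul_mem_of_left b ha := fun x hx => by
    rw [mul_assoc]; exact ha _ (q_X_mul b hx)

theorem q_nil {R : Type*} [Ring R] (hacc : ACCOnRightAnnihilators R)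
    (hess : IsEssentialRIdeal R (rSocle R)) : ∃ n : ℕ, ∀ x ∈ (q_J R : Set R) ^ n, x = 0 := by
  obtain ⟨n, hn⟩ := q_max hacc (fun n : ℕ => (q_J R : Set R) ^ n)
  have hn1 : rAnn R ((q_J R : Set R) ^ (n + 1)) = rAnn R ((q_J R : Set R) ^ n) := by
    apply hn
    intro y hy z hz
    rw [pow_succ'] at hz
    obtain ⟨a, _, p, hp, rfl⟩ := hz
    show a * p * y = 0
    rw [mul_assoc, hy p hp, mul_zero]
  refine ⟨n, ?_⟩
  by_contra! hcon
  obtain ⟨p, hp, hp0⟩ := hcon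
  have : Nonempty {a : R // a ∉ rAnn R ((q_J R : Set R) ^ n)} :=
    ⟨⟨1, fun h => hp0 (by simpa using h p hp)⟩⟩
  obtain ⟨⟨a, ha⟩, hmax⟩ := q_max hacc
    (fun a : {a : R // a ∉ rAnn R ((q_J R : Set R) ^ n)} => ({a.1} : Set R))
  apply ha
  rw [← hn1]
  intro z hz
  rw [pow_succ] at hz
  obtain ⟨q, hq, b, hb, rfl⟩ := hz
  show q * b * a = 0
  rw [mul_assoc]
  by_contra hne
  have h1 := hmax ⟨b * a, fun h => hne (h q hq)⟩ (by
    rintro y hy _ rfl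
    show b * a * y = 0
    rw [mul_assoc, hy a rfl, mul_zero])
  have hle : rSocle R ≤ rAnnI R {b} := by
    apply sSup_le
    rintro m hm x hx _ rfl
    exact hb x ⟨m, hm, hx⟩
  have hbot : Submodule.span Rᵐᵒᵖ ({a} : Set R) ⊓ rSocle R = ⊥ := by
    rw [eq_bot_iff]
    rintro y ⟨hy, hy2⟩
    obtain ⟨r, rfl⟩ := Submodule.mem_span_singleton.1 hy
    have h3 : b * (a * r.unop) = 0 := hle hy2 b rfl
    have h4 : r.unop ∈ rAnn R {b * a} := by
      rintro _ rfl
      rw [mul_assoc, h3]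
    have h5 : r.unop ∈ rAnn R {a} := by
      rw [← h1]; exact h4
    exact h5 a rfl
  have h6 := hess _ hbot
  have h7 : a = 0 := by simpa using h6
  exact hne (by rw [h7, mul_zero, mul_zero])

theorem q_ss {R : Type*} [Ring R] (hr : IsRightMininjective R)
    (hacc : ACCOnRightAnnihilators R) : IsSemisimpleRing (R ⧸ q_J R) := by
  obtain ⟨F, hF, hFX⟩ := q_fin hacc (q_X R)
  choose m hm hxm using fun x : F => hF x.2
  have hsim : ∀ i, IsSemisimpleModule R (m i →ₗ[Rᵐᵒᵖ] R) := by
    intro i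
    rcases (Order.le_one_iff.1 (q_right hr (m i) (hm i))) with h | h
    · have := Module.length_eq_zero_iff.1 h
      exact (isSemisimpleModule_iff _ _).mpr Subsingleton.instComplementedLattice
    · have := Module.length_eq_one_iff.1 h
      infer_instance
  let φ : R →ₗ[R] (∀ i, (m i →ₗ[Rᵐᵒᵖ] R)) := LinearMap.pi fun i => q_lmul (m i)
  have hker : LinearMap.ker φ = q_J R := by
    ext c
    rw [LinearMap.mem_ker]
    constructor
    · intro h
      show c ∈ lAnn R (q_X R)
      rw [← hFX]
      intro x hx
      exact LinearMap.congr_fun (congrFun h ⟨x, hx⟩) ⟨x, hxm ⟨x, hx⟩⟩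
    · intro h
      ext i x
      exact h x.1 ⟨m i, hm i, x.2⟩
  have h1 : IsSemisimpleModule R (R ⧸ q_J R) := by
    refine IsSemisimpleModule.of_injective (Submodule.liftQ (q_J R) φ hker.ge) ?_
    rw [← LinearMap.ker_eq_bot]
    exact Submodule.ker_liftQ_eq_bot _ _ _ hker.le
  let l : (R ⧸ q_J R) →ₛₗ[Ideal.Quotient.mk (q_J R)] (R ⧸ q_J R) :=
    { toFun := id
      map_add' := fun _ _ => rfl
      map_smul' := fun a x => by
        obtain ⟨x, rfl⟩ := Ideal.Quotient.mk_surjective x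
        rfl }
  have : RingHomSurjective (Ideal.Quotient.mk (q_J R)) := ⟨Ideal.Quotient.mk_surjective⟩
  exact (l.isSemisimpleModule_iff_of_bijective Function.bijective_id).1 h1

/-- `J` as a right ideal. -/
def q_J' (R : Type*) [Ring R] : RIdeal R where
  carrier := q_J R
  add_mem' := (q_J R).add_mem
  zero_mem' := (q_J R).zero_mem
  smul_mem' c _ hx := (q_J R).mul_mem_right c.unop hx

theorem q_rlen {R : Type*} [Ring R] (hr : IsRightMininjective R)
    (hacc : ACCOnRightAnnihilators R) : Module.length Rᵐᵒᵖ (R ⧸ q_J' R) ≠ ⊤ := by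
  have := q_ss hr hacc
  let Q := (R ⧸ q_J R)ᵐᵒᵖ
  have hQ : Module.length Q Q ≠ ⊤ := Module.length_ne_top
  let σ : Rᵐᵒᵖ →+* Q := (Ideal.Quotient.mk (q_J R)).op
  have : RingHomSurjective σ := ⟨fun y => by
    obtain ⟨x, hx⟩ := Ideal.Quotient.mk_surjective y.unop
    exact ⟨op x, congrArg op hx⟩⟩
  let g0 : R →ₛₗ[σ] Q :=
    { toFun := fun x => op (Ideal.Quotient.mk (q_J R) x)
      map_add' := fun _ _ => by simp
      map_smul' := fun a x => by
        show op (Ideal.Quotient.mk (q_J R) (x * a.unop)) =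
          op (Ideal.Quotient.mk (q_J R) a.unop) * op (Ideal.Quotient.mk (q_J R) x)
        rw [map_mul, op_mul] }
  have hk : LinearMap.ker g0 = q_J' R := by
    ext x
    simp only [LinearMap.mem_ker]
    show op (Ideal.Quotient.mk (q_J R) x) = 0 ↔ x ∈ q_J R
    rw [op_eq_zero_iff, Ideal.Quotient.eq_zero_iff_mem]
  let g : (R ⧸ q_J' R) →ₛₗ[σ] Q := Submodule.liftQ _ g0 hk.ge
  have hg : Function.Injective g := by
    rw [← LinearMap.ker_eq_bot]
    exact Submodule.ker_liftQ_eq_bot _ _ _ hk.le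
  have hle := Order.krullDim_le_of_strictMono _ (Submodule.map_strictMono_of_injective hg)
  rw [← Module.coe_length, ← Module.coe_length] at hle
  exact ne_top_of_le_ne_top hQ (WithBot.coe_le_coe.1 hle)

theorem q_lJ {R : Type*} [Ring R] (hr : IsRightMininjective R)
    (hacc : ACCOnRightAnnihilators R) : Module.length R (lAnnI R (q_J R : Set R)) ≠ ⊤ := by
  have h1 := (Module.length_le_of_injective _ (q_lann_inj (q_J' R))).trans
    (q_hom_len (q_right hr) _)
  have h2 : LinearMap.ker (q_lmul (q_J' R)) = lAnnI R (q_J R : Set R) := by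
    ext c
    rw [LinearMap.mem_ker]
    constructor
    · intro h x hx
      exact LinearMap.congr_fun h ⟨x, hx⟩
    · intro h
      ext x
      exact h x.1 x.2
  rw [h2] at h1
  exact ne_top_of_le_ne_top (q_rlen hr hacc) h1

theorem q_pow {R : Type*} [Ring R] (hr : IsRightMininjective R)
    (hacc : ACCOnRightAnnihilators R) (k : ℕ) :
    Module.length R (lAnnI R ((q_J R : Set R) ^ k)) ≠ ⊤ := by
  induction k with
  | zero =>
    have : lAnnI R ((q_J R : Set R) ^ 0) = ⊥ := by
      rw [eq_bot_iff]
      intro x hx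
      have := hx 1 (by simp)
      simpa using this
    rw [this]; simp
  | succ k ih =>
    obtain ⟨F, hF, hFX⟩ := q_fin hacc (q_J R : Set R)
    let ψ : lAnnI R ((q_J R : Set R) ^ (k + 1)) →ₗ[R]
        (F → lAnnI R ((q_J R : Set R) ^ k)) :=
      { toFun := fun t i => ⟨t.1 * i.1, fun p hp => by
          rw [mul_assoc]
          exact t.2 _ (by rw [pow_succ']; exact Set.mul_mem_mul (hF i.2) hp)⟩
        map_add' := fun a b => by ext; simp [add_mul]
        map_smul' := fun a b => by ext; simp [mul_assoc] }
    have h1 := q_len_le ψ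
    let ι : LinearMap.ker ψ →ₗ[R] lAnnI R (q_J R : Set R) :=
      LinearMap.codRestrict _ ((Submodule.subtype _) ∘ₗ (Submodule.subtype _)) (fun t => by
        show t.1.1 ∈ lAnn R (q_J R : Set R)
        rw [← hFX]
        intro x hx
        have := congrFun (LinearMap.mem_ker.1 t.2) ⟨x, hx⟩
        exact congrArg Subtype.val this)
    have h2 := Module.length_le_of_injective ι (by
      intro a b h
      have := congrArg Subtype.val h
      exact Subtype.ext (Subtype.ext this))
    have hc : ENat.card F ≠ ⊤ := by
      rw [ENat.card_eq_coe_fintype_card]; exact ENat.coe_ne_top _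
    refine ne_top_of_le_ne_top ?_ h1
    rw [Module.length_pi]
    simp only [ne_eq, ENat.add_eq_top, not_or]
    refine ⟨ne_top_of_le_ne_top (q_lJ hr hacc) h2, WithTop.mul_ne_top hc ih⟩
end Helpers

open scoped Pointwise in
theorem q_main (R : Type*) [Ring R] (hlmin : IsLeftMininjective R)
    (hrmin : IsRightMininjective R) (hacc : ACCOnRightAnnihilators R)
    (hess : IsEssentialRIdeal R (rSocle R)) : IsQuasiFrobenius R := by
  obtain ⟨n, hn⟩ := q_nil hacc hess
  apply q_final hlmin hrmin
  have h := q_pow hrmin hacc n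
  have ht : lAnnI R ((q_J R : Set R) ^ n) = ⊤ := by
    rw [eq_top_iff]
    intro x _ y hy
    rw [hn y hy, mul_zero]
  rwa [ht, Module.length_top] at h

theorem stmt16 (R : Type*) [Ring R] (hlmin : IsLeftMininjective R)
    (hrmin : IsRightMininjective R) (hacc : ACCOnRightAnnihilators R)
    (hess : IsEssentialRIdeal R (rSocle R)) : IsQuasiFrobenius R := by
  exact q_main R hlmin hrmin hacc hess
end
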